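/- arXiv:math/0303070 — 4 statements merged into one kernel-verified Lean document; each statement's English description precedes it below -/
import Mathlib

section
/- For a unilateral weighted shift S with positive bounded weights, the local spectrum σ_S(x) is connected for every x ∈ H. -/
open Filter

section Defs

variable {X : Type*} [NormedAddCommGroup X] [NormedSpace ℂ X]

/-- The local resolvent set of `T` at `x`. -/
def localResolventSet (T : X →L[ℂ] X) (x : X) : Set ℂ :=
  {μ | ∃ U : Set ℂ, IsOpen U ∧ μ ∈ U ∧ ∃ f : ℂ → X, AnalyticOnNhd ℂ f U ∧
    ∀ z ∈ U, (T - z • (1 : X →L[ℂ] X)) (f z) = x}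

/-- The local spectrum of `T` at `x`. -/
def localSpectrum (T : X →L[ℂ] X) (x : X) : Set ℂ :=
  (localResolventSet T x)ᶜ

end Defs

variable {H : Type*} [NormedAddCommGroup H] [InnerProductSpace ℂ H] [CompleteSpace H]

open Topology in
/-- key lemma: a compact relatively clopen piece of the local spectrum missing 0 is empty -/
theorem lsc_key (S : H →L[ℂ] H)
    (e : HilbertBasis ℕ ℂ H) (ω : ℕ → ℝ)
    (hS : ∀ n, S (e n) = (ω n : ℂ) • e (n + 1))
    (x : H) (U : Set ℂ) (hU : IsOpen U) (hUb : Bornology.IsBounded U)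
    (h0 : (0 : ℂ) ∉ closure U) (hfr : frontier U ⊆ localResolventSet S x) :
    U ⊆ localResolventSet S x := by
  classical
  let p : ℕ → (H →L[ℂ] H) := fun n => (innerSL ℂ (e n)).smulRight (e n)
  have hp : ∀ n y, p n y = (inner ℂ (e n) y) • e n := fun n y => by simp [p]
  have hsum : ∀ y, HasSum (fun n => p n y) y := by
    intro y
    have := e.hasSum_repr y
    simpa [hp, e.repr_apply_apply] using this
  have hpe : ∀ i j, p i (e j) = if i = j then e j else 0 := by
    intro i j
    rw [hp, orthonormal_iff_ite.1 e.orthonormal i j]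
    split_ifs with h
    · simp [h]
    · simp
  have hpS : ∀ n y, p (n + 1) (S y) = S (p n y) := by
    intro n y
    have h1 := ((hsum y).mapL S).mapL (p (n + 1))
    have h2 : HasSum (fun b => p (n + 1) (S (p b y))) (p (n + 1) (S (p n y))) := by
      apply hasSum_single
      intro b hb
      rw [hp b y, map_smul, hS, map_smul, map_smul, hpe]
      simp [Ne.symm hb]
    rw [h1.unique h2, hp n y, map_smul, hS, map_smul, map_smul, hpe]
    simp
  have hpS0 : ∀ y, p 0 (S y) = 0 := by
    intro y
    have h1 := ((hsum y).mapL S).mapL (p 0)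
    refine h1.unique ?_
    convert hasSum_zero with b
    rw [hp b y, map_smul, hS, map_smul, map_smul, hpe]
    simp
  let v : ℂ → ℕ → H := fun z n => Nat.rec (-(z⁻¹ • p 0 x))
    (fun k w => z⁻¹ • (S w - p (k + 1) x)) n
  have hv0 : ∀ z, v z 0 = -(z⁻¹ • p 0 x) := fun z => rfl
  have hvs : ∀ z n, v z (n + 1) = z⁻¹ • (S (v z n) - p (n + 1) x) := fun z n => rfl
  let G : ℕ → ℂ → H := fun n z => ∑ i ∈ Finset.range n, v z i
  have hvd : ∀ n z, z ≠ 0 → DifferentiableAt ℂ (fun z => v z n) z := by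
    intro n z hz
    induction n with
    | zero =>
      simp only [hv0]
      exact ((differentiableAt_inv hz).smul_const _).neg
    | succ n ih =>
      simp only [hvs]
      exact (differentiableAt_inv hz).smul ((S.differentiableAt.comp z ih).sub_const _)
  have hGd : ∀ n z, z ≠ 0 → DifferentiableAt ℂ (G n) z := by
    intro n z hz
    exact DifferentiableAt.fun_sum fun i _ => hvd i z hz
  have hGS : ∀ n z, z ≠ 0 → (S - z • (1 : H →L[ℂ] H)) (G (n + 1) z)
      = S (v z n) + ∑ i ∈ Finset.range (n + 1), p i x := by
    intro n z hz
    induction n with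
    | zero => simp [G, hv0, smul_smul, hz]
    | succ n ih =>
      have : G (n + 1 + 1) z = G (n + 1) z + v z (n + 1) := Finset.sum_range_succ _ _
      rw [this, map_add, ih, Finset.sum_range_succ _ (n + 1)]
      have h3 : z • v z (n + 1) = S (v z n) - p (n + 1) x := by
        rw [hvs, smul_smul, mul_inv_cancel₀ hz, one_smul]
      have h4 : (S - z • (1 : H →L[ℂ] H)) (v z (n + 1))
          = S (v z (n + 1)) - z • v z (n + 1) := by simp
      rw [h4, h3]
      abel
  -- coordinates of solutions
  have hcoord : ∀ z y, z ≠ 0 → (S - z • (1 : H →L[ℂ] H)) y = x → ∀ n, p n y = v z n := by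
    intro z y hz hy n
    have hy' : S y - z • y = x := by simpa using hy
    induction n with
    | zero =>
      rw [hv0, ← hy', map_sub, hpS0, map_smul, zero_sub, smul_neg, smul_smul,
        inv_mul_cancel₀ hz, one_smul, neg_neg]
    | succ n ih =>
      rw [hvs, ← ih, ← hpS, ← map_sub, ← map_smul]
      congr 1
      rw [← hy', sub_sub_cancel, smul_smul, inv_mul_cancel₀ hz, one_smul]
  have huniq : ∀ (z : ℂ) (y y' : H), z ≠ 0 → (S - z • (1 : H →L[ℂ] H)) y = x →
      (S - z • (1 : H →L[ℂ] H)) y' = x → y = y' := by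
    intro z y y' hz h h'
    refine (hsum y).unique ?_
    have : (fun n => p n y) = fun n => p n y' := by
      funext n
      rw [hcoord z y hz h, hcoord z y' hz h']
    rw [this]
    exact hsum y'
  have hne : ∀ z ∈ closure U, z ≠ 0 := fun z hz h => h0 (h ▸ hz)
  -- the local resolvent function on the frontier
  have hex : ∀ z, ∃ y, z ∈ localResolventSet S x → (S - z • (1 : H →L[ℂ] H)) y = x := by
    intro z
    by_cases h : z ∈ localResolventSet S x
    · obtain ⟨W, _, hzW, f, _, hf⟩ := h
      exact ⟨f z, fun _ => hf z hzW⟩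
    · exact ⟨0, fun h' => absurd h' h⟩
  choose f hf using hex
  have hfc : ContinuousOn f (frontier U) := by
    intro z hz
    have hz0 := hne z (frontier_subset_closure hz)
    obtain ⟨W, hW, hzW, g, hg, hgx⟩ := hfr hz
    have : f =ᶠ[𝓝 z] g := by
      filter_upwards [hW.mem_nhds hzW, isOpen_ne.mem_nhds hz0] with w hw hw0
      exact huniq w _ _ hw0 (hf w ⟨W, hW, hw, g, hg, hgx⟩) (hgx w hw)
    exact ((hg z hzW).continuousAt.congr this.symm).continuousWithinAt
  have hfrc : IsCompact (frontier U) :=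
    Metric.isCompact_of_isClosed_isBounded isClosed_frontier
      (hUb.closure.subset frontier_subset_closure)
  have hK : IsCompact (f '' frontier U) := hfrc.image_of_continuousOn hfc
  let P : ℕ → (H →L[ℂ] H) := fun n => ∑ i ∈ Finset.range n, p i
  have hP : ∀ n y, P n y = ∑ i ∈ Finset.range n, p i y := fun n y => by
    simp [P]
  have hPt : ∀ y, Tendsto (fun n => P n y) atTop (𝓝 y) := by
    intro y
    simpa only [hP] using (hsum y).tendsto_sum_nat
  have hPG : ∀ n, ∀ z ∈ frontier U, P n (f z) = G n z := by
    intro n z hz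
    rw [hP]
    exact Finset.sum_congr rfl fun i _ =>
      hcoord z _ (hne z (frontier_subset_closure hz)) (hf z (hfr hz)) i
  obtain ⟨C, hC⟩ : ∃ C, ∀ n, ‖P n‖ ≤ C := by
    apply banach_steinhaus
    intro y
    obtain ⟨C, hC⟩ := (hPt y).norm.bddAbove_range
    exact ⟨C, fun n => hC ⟨n, rfl⟩⟩
  have hC0 : 0 ≤ C := (norm_nonneg _).trans (hC 0)
  have hunif : ∀ ε > 0, ∃ N, ∀ n ≥ N, ∀ z ∈ frontier U, ‖P n (f z) - f z‖ < ε := by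
    intro ε hε
    set δ := ε / (C + 2) with hδ
    have hδ0 : 0 < δ := by positivity
    obtain ⟨t, -, htf, ht⟩ := hK.finite_cover_balls hδ0
    have : ∀ᶠ n in atTop, ∀ y ∈ t, ‖P n y - y‖ < δ := by
      rw [Filter.eventually_all_finite htf]
      intro y _
      have := Metric.tendsto_nhds.1 (hPt y) δ hδ0
      simpa [dist_eq_norm] using this
    obtain ⟨N, hN⟩ := eventually_atTop.1 this
    refine ⟨N, fun n hn z hz => ?_⟩
    obtain ⟨y, hy, hyz⟩ := Set.mem_iUnion₂.1 (ht ⟨z, hz, rfl⟩)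
    rw [Metric.mem_ball, dist_eq_norm] at hyz
    have e1 : P n (f z) - f z = P n (f z - y) + (P n y - y) - (f z - y) := by
      rw [map_sub]; abel
    have e2 : ‖P n (f z - y)‖ ≤ C * δ :=
      ((P n).le_of_opNorm_le (hC n) _).trans (by gcongr)
    have e3 := hN n hn y hy
    calc ‖P n (f z) - f z‖ ≤ ‖P n (f z - y)‖ + ‖P n y - y‖ + ‖f z - y‖ := by
          rw [e1]; exact (norm_sub_le _ _).trans (by gcongr; exact norm_add_le _ _)
      _ < C * δ + δ + δ := by linarith
      _ = ε := by rw [hδ]; field_simp; ring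
  have hcau : ∀ ε > 0, ∃ N, ∀ n ≥ N, ∀ m ≥ N, ∀ z ∈ closure U, ‖G n z - G m z‖ < ε := by
    intro ε hε
    obtain ⟨N, hN⟩ := hunif (ε / 4) (by positivity)
    refine ⟨N, fun n hn m hm z hz => ?_⟩
    have hd : DiffContOnCl ℂ (fun z => G n z - G m z) U := by
      apply DifferentiableOn.diffContOnCl
      intro w hw
      exact ((hGd n w (hne w hw)).sub (hGd m w (hne w hw))).differentiableWithinAt
    have : ‖G n z - G m z‖ ≤ ε / 2 := by
      refine Complex.norm_le_of_forall_mem_frontier_norm_le hUb hd (fun w hw => ?_) hz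
      have h1 := hN n hn w hw
      have h2 := hN m hm w hw
      rw [hPG n w hw] at h1
      rw [hPG m w hw] at h2
      have : G n w - G m w = (G n w - f w) - (G m w - f w) := by abel
      rw [this]
      exact (norm_sub_le _ _).trans (by linarith)
    linarith
  have hUC : UniformCauchySeqOn G atTop U := by
    rw [Metric.uniformCauchySeqOn_iff]
    intro ε hε
    obtain ⟨N, hN⟩ := hcau ε hε
    exact ⟨N, fun m hm n hn z hz => by
      rw [dist_eq_norm]; exact hN m hm n hn z (subset_closure hz)⟩
  have hlim : ∀ z, ∃ y, z ∈ U → Tendsto (fun n => G n z) atTop (𝓝 y) := by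
    intro z
    by_cases h : z ∈ U
    · obtain ⟨y, hy⟩ := cauchySeq_tendsto_of_complete (hUC.cauchySeq h)
      exact ⟨y, fun _ => hy⟩
    · exact ⟨0, fun h' => absurd h' h⟩
  choose F hF using hlim
  have hTU : TendstoUniformlyOn G F atTop U :=
    hUC.tendstoUniformlyOn_of_tendsto fun z hz => hF z hz
  have hFd : DifferentiableOn ℂ F U := by
    refine hTU.tendstoLocallyUniformlyOn.differentiableOn (Eventually.of_forall fun n z hz => ?_) hU
    exact (hGd n z (hne z (subset_closure hz))).differentiableWithinAt
  intro z hz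
  refine ⟨U, hU, hz, F, hFd.analyticOnNhd hU, fun w hw => ?_⟩
  have hw0 := hne w (subset_closure hw)
  have t1 : Tendsto (fun n => G (n + 1) w) atTop (𝓝 (F w)) :=
    (hF w hw).comp (tendsto_add_atTop_nat 1)
  have t2 : Tendsto (fun n => v w n) atTop (𝓝 0) := by
    have := t1.sub (hF w hw)
    simpa [G, Finset.sum_range_succ] using this
  have t3 := ((S - w • (1 : H →L[ℂ] H)).continuous.tendsto _).comp t1
  have t4 : Tendsto (fun n => S (v w n) + ∑ i ∈ Finset.range (n + 1), p i x) atTop (𝓝 (0 + x)) := by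
    refine Tendsto.add ?_ ((hsum x).tendsto_sum_nat.comp (tendsto_add_atTop_nat 1))
    simpa [Function.comp_def] using (S.continuous.tendsto 0).comp t2
  rw [zero_add] at t4
  refine tendsto_nhds_unique t3 (t4.congr fun n => ?_)
  exact (hGS n w hw0).symm

theorem lsc_isOpen (S : H →L[ℂ] H) (x : H) : IsOpen (localResolventSet S x) := by
  rw [isOpen_iff_mem_nhds]
  rintro z ⟨W, hW, hz, h⟩
  filter_upwards [hW.mem_nhds hz] with w hw
  exact ⟨W, hW, hw, h⟩

theorem lsc_compact (S : H →L[ℂ] H) (x : H) : IsCompact (localSpectrum S x) := by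
  refine (spectrum.isCompact (𝕜 := ℂ) S).of_isClosed_subset
    (lsc_isOpen S x).isClosed_compl ?_
  intro z hz
  by_contra hzs
  apply hz
  refine ⟨resolventSet ℂ S, spectrum.isOpen_resolventSet S, ?_,
    fun w => -(resolvent S w x), ?_, ?_⟩
  · simpa [spectrum] using hzs
  · refine DifferentiableOn.analyticOnNhd (fun w hw => ?_) (spectrum.isOpen_resolventSet S)
    have := (spectrum.hasDerivAt_resolvent (𝕜 := ℂ) (a := S) hw).differentiableAt
    exact ((this.clm_apply (differentiableAt_const x)).neg).differentiableWithinAt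
  · intro w hw
    have h1 : (algebraMap ℂ (H →L[ℂ] H) w - S) * resolvent S w = 1 :=
      Ring.mul_inverse_cancel _ hw
    have h2 := congrArg (fun T : H →L[ℂ] H => T x) h1
    simp [Algebra.algebraMap_eq_smul_one] at h2
    refine Eq.trans ?_ h2
    simp
    abel

theorem lsc_piece (S : H →L[ℂ] H)
    (e : HilbertBasis ℕ ℂ H) (ω : ℕ → ℝ)
    (hS : ∀ n, S (e n) = (ω n : ℂ) • e (n + 1))
    (x : H) (u v : Set ℂ) (hu : IsClosed u) (hv : IsClosed v)
    (huv : localSpectrum S x ⊆ u ∪ v) (hd : Disjoint u v) (h0 : (0 : ℂ) ∉ v) :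
    localSpectrum S x ⊆ u := by
  have hB : IsCompact (localSpectrum S x ∩ v) := (lsc_compact S x).inter_right hv
  have hO : IsOpen (u ∪ {0})ᶜ := (hu.union isClosed_singleton).isOpen_compl
  have hBO : localSpectrum S x ∩ v ⊆ (u ∪ {0})ᶜ := by
    rintro z ⟨_, hz⟩ (h | h)
    · exact Set.disjoint_left.1 hd h hz
    · exact h0 (h ▸ hz)
  obtain ⟨L, hL, hBL, hLO⟩ := exists_compact_between hB hO hBO
  have hcl : closure (interior L) ⊆ L := hL.isClosed.closure_interior_subset
  have key := lsc_key S e ω hS x (interior L) isOpen_interior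
    (hL.isBounded.subset interior_subset) (fun h => hLO (hcl h) (Or.inr rfl)) (by
      intro z hz
      by_contra hzs
      have hzu : z ∉ u := fun h => hLO (hcl (frontier_subset_closure hz)) (Or.inl h)
      have hzv : z ∈ v := (huv hzs).resolve_left hzu
      have h1 := hBL ⟨hzs, hzv⟩
      rw [isOpen_interior.frontier_eq] at hz
      exact hz.2 h1)
  intro z hz
  refine (huv hz).resolve_right fun h => hz (key (hBL ⟨hz, h⟩))

/-- For a unilateral weighted shift `S` with positive bounded weights, the local spectrum
`σ_S(x)` is connected for every `x ∈ H`. -/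
theorem localSpectrum_connected (S : H →L[ℂ] H)
    (e : HilbertBasis ℕ ℂ H) (ω : ℕ → ℝ) (hpos : ∀ n, 0 < ω n)
    (hbd : ∃ M : ℝ, ∀ n, ω n ≤ M)
    (hS : ∀ n, S (e n) = (ω n : ℂ) • e (n + 1))
    (x : H) :
    IsPreconnected (localSpectrum S x) := by
  rw [isPreconnected_iff_subset_of_fully_disjoint_closed (lsc_compact S x).isClosed]
  intro u v hu hv huv hd
  by_cases h0 : (0 : ℂ) ∈ v
  · right
    exact lsc_piece S e ω hS x v u hv hu (by rwa [Set.union_comm]) hd.symm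
      (fun h => Set.disjoint_left.1 hd h h0)
  · left
    exact lsc_piece S e ω hS x u v hu hv huv hd h0
end

section
/- If a unilateral weighted shift S with positive bounded weights satisfies Dunford's condition (C), then r(S) = r₃(S), i.e., the spectral radius equals limsup (ω_0⋯ω_{n-1})^{1/n}. -/
open Filter

section Defs

variable {X : Type*} [NormedAddCommGroup X] [NormedSpace ℂ X]

/-- Dunford's condition (C): every analytic spectral subspace
`X_T(F) = {x : σ_T(x) ⊆ F}`, `F` closed, is closed. -/
def DunfordConditionC (T : X →L[ℂ] X) : Prop :=
  ∀ F : Set ℂ, IsClosed F → IsClosed {x : X | localSpectrum T x ⊆ F}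

end Defs

variable {H : Type*} [NormedAddCommGroup H] [InnerProductSpace ℂ H] [CompleteSpace H]

lemma aux_pow (S : H →L[ℂ] H) (e : HilbertBasis ℕ ℂ H) (ω : ℕ → ℝ)
    (hS : ∀ n, S (e n) = (ω n : ℂ) • e (n + 1)) (n : ℕ) :
    (S ^ n) (e 0) = ((∏ i ∈ Finset.range n, ω i : ℝ) : ℂ) • e n := by
  induction n with
  | zero => simp
  | succ k ih =>
    rw [pow_succ', mul_apply_eq_comp, ih, map_smul, hS, smul_smul,
      Finset.prod_range_succ]
    push_cast
    rfl

lemma aux_ext (e : HilbertBasis ℕ ℂ H) (f g : H →L[ℂ] ℂ) (h : ∀ n, f (e n) = g (e n)) :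
    f = g := by
  refine ContinuousLinearMap.ext_on (s := Set.range e) ?_ ?_
  · have := e.dense_span
    rw [Submodule.dense_iff_topologicalClosure_eq_top]
    exact this
  · rintro _ ⟨n, rfl⟩
    exact h n

lemma aux_inner (e : HilbertBasis ℕ ℂ H) (m n : ℕ) :
    inner ℂ (e m) (e n) = if m = n then (1 : ℂ) else 0 :=
  orthonormal_iff_ite.mp e.orthonormal m n

lemma aux_inj (S : H →L[ℂ] H) (e : HilbertBasis ℕ ℂ H) (ω : ℕ → ℝ)
    (hS : ∀ n, S (e n) = (ω n : ℂ) • e (n + 1)) (z : ℂ) (hz : z ≠ 0) (x : H)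
    (hx : S x = z • x) : x = 0 := by
  have h0 : (innerSL ℂ (e 0)).comp S = 0 := by
    apply aux_ext e
    intro n
    simp [hS, aux_inner, inner_smul_right]
  have h1 : ∀ k, (innerSL ℂ (e (k+1))).comp S = (ω k : ℂ) • innerSL ℂ (e k) := by
    intro k
    apply aux_ext e
    intro n
    simp only [ContinuousLinearMap.comp_apply, hS, map_smul, innerSL_apply_apply, aux_inner,
      ContinuousLinearMap.smul_apply]
    by_cases h : k = n <;> simp [h]
  have hc : ∀ k, inner ℂ (e k) x = (0 : ℂ) := by
    intro k
    induction k with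
    | zero =>
      have := congrArg (fun f => f x) h0
      simpa [hx, inner_smul_right, hz] using this
    | succ k ih =>
      have := congrArg (fun f => f x) (h1 k)
      simpa [hx, inner_smul_right, hz, ih] using this
  have : innerSL ℂ x = 0 := by
    apply aux_ext e
    intro n
    simp only [innerSL_apply_apply, ContinuousLinearMap.zero_apply]
    rw [← inner_conj_symm, hc, map_zero]
  have h2 := congrArg (fun f => f x) this
  simpa using h2

lemma aux_local (S : H →L[ℂ] H) (x : H) (ρ : ℝ) (hρ : 0 < ρ)
    (hx : Summable fun n => ‖(S ^ n) x‖ * (ρ⁻¹) ^ n) (μ : ℂ) (hμ : ρ < ‖μ‖) :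
    μ ∈ localResolventSet S x := by
  have hU : IsOpen {z : ℂ | ρ < ‖z‖} := isOpen_lt continuous_const continuous_norm
  have hne : ∀ z ∈ {z : ℂ | ρ < ‖z‖}, z ≠ 0 := by
    rintro z hz rfl
    simp at hz
    linarith
  have hu : Summable fun n => ‖(S ^ n) x‖ * (ρ⁻¹) ^ n * ρ⁻¹ := hx.mul_right _
  have hb : ∀ n (z : ℂ), z ∈ {z : ℂ | ρ < ‖z‖} →
      ‖-((z⁻¹) ^ (n+1)) • (S ^ n) x‖ ≤ ‖(S ^ n) x‖ * (ρ⁻¹) ^ n * ρ⁻¹ := by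
    intro n z hz
    have hz' : ρ < ‖z‖ := hz
    rw [norm_smul, norm_neg, norm_pow, norm_inv, mul_assoc, ← pow_succ, mul_comm]
    gcongr
  refine ⟨_, hU, hμ, fun z => ∑' n, -((z⁻¹) ^ (n+1)) • (S ^ n) x, ?_, ?_⟩
  · apply DifferentiableOn.analyticOnNhd _ hU
    apply Complex.differentiableOn_tsum_of_summable_norm hu _ hU hb
    intro n
    apply DifferentiableOn.smul_const
    apply DifferentiableOn.neg
    apply DifferentiableOn.pow
    intro z hz
    exact (differentiableAt_inv (hne z hz)).differentiableWithinAt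
  · intro z hz
    have hz0 := hne z hz
    have hs : Summable fun n => -((z⁻¹) ^ (n+1)) • (S ^ n) x :=
      Summable.of_norm_bounded hu (fun n => hb n z hz)
    have e1 : S (∑' n, -((z⁻¹) ^ (n+1)) • (S ^ n) x)
        = ∑' n, -((z⁻¹) ^ (n+1)) • (S ^ (n+1)) x := by
      rw [S.map_tsum hs]
      congr 1
      ext n
      rw [map_smul, pow_succ' S, mul_apply_eq_comp]
    have e2 : z • (∑' n, -((z⁻¹) ^ (n+1)) • (S ^ n) x)
        = ∑' n, -((z⁻¹) ^ n) • (S ^ n) x := by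
      rw [← hs.tsum_const_smul]
      congr 1
      ext n
      rw [smul_smul]
      congr 1
      rw [pow_succ]
      field_simp
    have hs2 : Summable fun n => -((z⁻¹) ^ n) • (S ^ n) x := by
      have := hs.const_smul z
      refine this.congr fun n => ?_
      rw [smul_smul]
      congr 1
      rw [pow_succ]
      field_simp
    simp only [ContinuousLinearMap.sub_apply, ContinuousLinearMap.smul_apply,
      ContinuousLinearMap.one_apply]
    rw [e1, e2, hs2.tsum_eq_zero_add]
    simp

/-- vectors for which the local resolvent series converges outside radius `R` -/
def auxV (S : H →L[ℂ] H) (R : ℝ) : Submodule ℂ H where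
  carrier := {x | ∀ ρ : ℝ, 0 < ρ → R < ρ → Summable fun n => ‖(S ^ n) x‖ * (ρ⁻¹) ^ n}
  zero_mem' := by
    intro ρ _ _
    simpa using summable_zero
  add_mem' := by
    intro a b ha hb ρ h0 h1
    refine Summable.of_nonneg_of_le (fun n => by positivity) (fun n => ?_)
      ((ha ρ h0 h1).add (hb ρ h0 h1))
    rw [map_add, ← add_mul]
    gcongr
    exact norm_add_le _ _
  smul_mem' := by
    intro c a ha ρ h0 h1
    refine ((ha ρ h0 h1).mul_left ‖c‖).congr fun n => ?_
    rw [map_smul, norm_smul, mul_assoc]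

lemma auxV_S (S : H →L[ℂ] H) (R : ℝ) (x : H) (hx : x ∈ auxV S R) : S x ∈ auxV S R := by
  intro ρ h0 h1
  have := ((summable_nat_add_iff 1).2 (hx ρ h0 h1)).mul_right ρ
  refine this.congr fun n => ?_
  rw [pow_succ S, mul_apply_eq_comp, pow_succ]
  field_simp

theorem dunfordC_implies_r_eq_r₃ (S : H →L[ℂ] H)
    (e : HilbertBasis ℕ ℂ H) (ω : ℕ → ℝ) (hpos : ∀ n, 0 < ω n)
    (hbd : ∃ M : ℝ, ∀ n, ω n ≤ M)
    (hS : ∀ n, S (e n) = (ω n : ℂ) • e (n + 1))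
    (hC : DunfordConditionC S) :
    (spectralRadius ℂ S).toReal =
      atTop.limsup fun n : ℕ => (∏ i ∈ Finset.range n, ω i) ^ ((n : ℝ)⁻¹) := by
  have hβ : ∀ n, 0 < ∏ i ∈ Finset.range n, ω i := fun n => Finset.prod_pos fun i _ => hpos i
  have hnorm : ∀ n, ‖(S ^ n) (e 0)‖ = ∏ i ∈ Finset.range n, ω i := by
    intro n
    rw [aux_pow S e ω hS, norm_smul, e.orthonormal.1, mul_one, Complex.norm_real,
      Real.norm_of_nonneg (hβ n).le]
  have hle : ∀ n, (∏ i ∈ Finset.range n, ω i) ≤ ‖S ^ n‖ := by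
    intro n
    rw [← hnorm]
    simpa [e.orthonormal.1] using (S ^ n).le_opNorm (e 0)
  have hle2 : ∀ n : ℕ, (∏ i ∈ Finset.range n, ω i) ^ ((n : ℝ)⁻¹) ≤ ‖S ^ n‖ ^ ((n : ℝ)⁻¹) :=
    fun n => Real.rpow_le_rpow (hβ n).le (hle n) (by positivity)
  have hnn : ∀ n : ℕ, 0 ≤ (∏ i ∈ Finset.range n, ω i) ^ ((n : ℝ)⁻¹) :=
    fun n => Real.rpow_nonneg (hβ n).le _
  have hfin : spectralRadius ℂ S ≠ ⊤ := by
    apply ne_top_of_le_ne_top _ (spectrum.spectralRadius_le_pow_nnnorm_pow_one_div ℂ S 0)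
    simp [ENNReal.mul_eq_top]
  have hlim : Tendsto (fun n : ℕ => ‖S ^ n‖ ^ ((n : ℝ)⁻¹)) atTop
      (nhds (spectralRadius ℂ S).toReal) := by
    have := (ENNReal.tendsto_toReal hfin).comp
      (spectrum.pow_norm_pow_one_div_tendsto_nhds_spectralRadius S)
    refine this.congr fun n => ?_
    simp only [Function.comp, one_div]
    rw [ENNReal.toReal_ofReal (by positivity)]
  have hbdd : IsBoundedUnder (· ≤ ·) atTop
      (fun n : ℕ => (∏ i ∈ Finset.range n, ω i) ^ ((n : ℝ)⁻¹)) :=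
    hlim.isBoundedUnder_le.mono_le (Eventually.of_forall hle2)
  have hcob : IsCoboundedUnder (· ≤ ·) atTop
      (fun n : ℕ => (∏ i ∈ Finset.range n, ω i) ^ ((n : ℝ)⁻¹)) :=
    IsBoundedUnder.isCoboundedUnder_le
      (isBoundedUnder_of_eventually_ge (Eventually.of_forall hnn))
  set R := atTop.limsup fun n : ℕ => (∏ i ∈ Finset.range n, ω i) ^ ((n : ℝ)⁻¹) with hR
  have hR0 : 0 ≤ R :=
    le_limsup_of_frequently_le (Eventually.of_forall hnn).frequently hbdd
  apply le_antisymm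
  · -- the hard direction
    have he0 : e 0 ∈ auxV S R := by
      intro ρ h0 h1
      obtain ⟨t, ht1, ht2⟩ := exists_between h1
      have ht0 : 0 < t := lt_of_le_of_lt hR0 ht1
      have hev := eventually_lt_of_limsup_lt ht1 hbdd
      have hgeo : Summable fun n : ℕ => (t * ρ⁻¹) ^ n :=
        summable_geometric_of_lt_one (by positivity) (by
          rw [← div_eq_mul_inv, div_lt_one h0]; exact ht2)
      refine Summable.of_norm_bounded_eventually_nat hgeo ?_
      filter_upwards [hev, eventually_gt_atTop 0] with n hn hn0
      rw [hnorm, norm_mul, norm_pow, norm_inv, Real.norm_of_nonneg h0.le,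
        Real.norm_of_nonneg (hβ n).le, mul_pow]
      gcongr
      calc (∏ i ∈ Finset.range n, ω i)
          = ((∏ i ∈ Finset.range n, ω i) ^ ((n : ℝ)⁻¹)) ^ n :=
            (Real.rpow_inv_natCast_pow (hβ n).le hn0.ne').symm
        _ ≤ t ^ n := pow_le_pow_left₀ (hnn n) hn.le n
    have hek : ∀ k, e k ∈ auxV S R := by
      intro k
      induction k with
      | zero => exact he0
      | succ k ih =>
        have h := auxV_S S R _ ih
        rw [hS] at h
        exact (Submodule.smul_mem_iff _ (by exact_mod_cast (hpos k).ne')).1 h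
    have hclosed := hC (Metric.closedBall 0 R) Metric.isClosed_closedBall
    have hsub : (auxV S R : Set H) ⊆ {x : H | localSpectrum S x ⊆ Metric.closedBall 0 R} := by
      intro x hx μ hμ
      by_contra hn
      apply hμ
      have hn' : R < ‖μ‖ := by simpa using hn
      obtain ⟨ρ, h1, h2⟩ := exists_between hn'
      have h0 : 0 < ρ := lt_of_le_of_lt hR0 h1
      exact aux_local S x ρ h0 (hx ρ h0 h1) μ h2
    have hdense : Dense (auxV S R : Set H) := by
      have hd : Dense (Submodule.span ℂ (Set.range e) : Set H) := by
        rw [Submodule.dense_iff_topologicalClosure_eq_top]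
        exact e.dense_span
      refine hd.mono ?_
      have : Submodule.span ℂ (Set.range e) ≤ auxV S R := by
        rw [Submodule.span_le]
        rintro _ ⟨k, rfl⟩
        exact hek k
      exact this
    have hall : ∀ x : H, localSpectrum S x ⊆ Metric.closedBall 0 R := by
      intro x
      have : x ∈ closure {x : H | localSpectrum S x ⊆ Metric.closedBall 0 R} :=
        (hdense.mono hsub) x
      rwa [hclosed.closure_eq] at this
    have hspec : ∀ z ∈ spectrum ℂ S, ‖z‖ ≤ R := by
      intro z hz
      by_contra hn
      push Not at hn
      have hz0 : z ≠ 0 := by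
        rintro rfl
        simp at hn
        linarith
      apply hz
      have hu : IsUnit (S - z • (1 : H →L[ℂ] H)) := by
        rw [ContinuousLinearMap.isUnit_iff_bijective]
        constructor
        · rw [injective_iff_map_eq_zero]
          intro x hx
          apply aux_inj S e ω hS z hz0 x
          simpa [sub_eq_zero] using hx
        · intro x
          have : z ∈ localResolventSet S x := by
            by_contra h
            have := hall x h
            simp at this
            linarith
          obtain ⟨U, _, hzU, f, _, hf⟩ := this
          exact ⟨f z, hf z hzU⟩
      have := hu.neg
      rwa [neg_sub] at this
    apply ENNReal.toReal_le_of_le_ofReal hR0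
    refine iSup₂_le fun z hz => ?_
    rw [← enorm_eq_nnnorm, ← ofReal_norm]
    exact ENNReal.ofReal_le_ofReal (hspec z hz)
  · rw [← hlim.limsup_eq]
    exact limsup_le_limsup (Eventually.of_forall hle2) hcob hlim.isBoundedUnder_le
end

section
/- If a bilateral weighted shift S with positive bounded weights satisfies Dunford's condition (C), then r₂⁻(S) ≤ r₃⁺(S), σ(S) ⊆ {λ : r₂⁻(S) ≤ |λ| ≤ r₃⁺(S)}, and hence r₃⁺(S) = r(S); moreover, if S is invertible then r₂⁻(S) = 1/r(S⁻¹), and if S is not invertible then r₂⁻(S) = 0. -/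
open Filter

variable {H : Type*} [NormedAddCommGroup H] [InnerProductSpace ℂ H] [CompleteSpace H]

theorem lrs_add {X : Type*} [NormedAddCommGroup X] [NormedSpace ℂ X] (T : X →L[ℂ] X) (x y : X) (l : ℂ)
    (hx : l ∈ localResolventSet T x) (hy : l ∈ localResolventSet T y) :
    l ∈ localResolventSet T (x + y) := by
  obtain ⟨U, hU, hlU, f, hf, hf'⟩ := hx
  obtain ⟨V, hV, hlV, g, hg, hg'⟩ := hy
  refine ⟨U ∩ V, hU.inter hV, ⟨hlU, hlV⟩, fun z => f z + g z,
    fun z hz => (hf z hz.1).add (hg z hz.2), fun z hz => ?_⟩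
  rw [map_add, hf' z hz.1, hg' z hz.2]

theorem lrs_smul {X : Type*} [NormedAddCommGroup X] [NormedSpace ℂ X] (T : X →L[ℂ] X) (x : X) (c l : ℂ)
    (hx : l ∈ localResolventSet T x) :
    l ∈ localResolventSet T (c • x) := by
  obtain ⟨U, hU, hlU, f, hf, hf'⟩ := hx
  refine ⟨U, hU, hlU, fun z => c • f z,
    fun z hz => analyticAt_const.smul (hf z hz), fun z hz => ?_⟩
  rw [map_smul, hf' z hz]

theorem lrs_zero {X : Type*} [NormedAddCommGroup X] [NormedSpace ℂ X] (T : X →L[ℂ] X) (l : ℂ) :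
    l ∈ localResolventSet T 0 :=
  ⟨Set.univ, isOpen_univ, trivial, fun _ => 0, fun _ _ => analyticAt_const, fun z _ => by simp⟩

theorem lrs_up {X : Type*} [NormedAddCommGroup X] [NormedSpace ℂ X] (T : X →L[ℂ] X) (x : X) (l : ℂ)
    (hx : l ∈ localResolventSet T x) :
    l ∈ localResolventSet T (T x) := by
  obtain ⟨U, hU, hlU, f, hf, hf'⟩ := hx
  refine ⟨U, hU, hlU, fun z => T (f z),
    fun z hz => (T.analyticAt _).comp (hf z hz), fun z hz => ?_⟩
  rw [← hf' z hz]
  simp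

theorem lrs_down {X : Type*} [NormedAddCommGroup X] [NormedSpace ℂ X] (T : X →L[ℂ] X) (x : X) (l : ℂ)
    (hl : l ≠ 0) (hx : l ∈ localResolventSet T (T x)) :
    l ∈ localResolventSet T x := by
  obtain ⟨U, hU, hlU, f, hf, hf'⟩ := hx
  refine ⟨U ∩ {0}ᶜ, hU.inter isOpen_compl_singleton, ⟨hlU, hl⟩, fun z => z⁻¹ • (f z - x),
    fun z hz => (analyticAt_id.inv hz.2).smul ((hf z hz.1).sub analyticAt_const), fun z hz => ?_⟩
  have h0 : z ≠ 0 := hz.2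
  rw [map_smul, map_sub, hf' z hz.1]
  simp [smul_smul, h0]

theorem lrs_outer {X : Type*} [NormedAddCommGroup X] [NormedSpace ℂ X] [CompleteSpace X]
    (T : X →L[ℂ] X) (x : ℕ → X) (hx : ∀ k, x (k + 1) = T (x k)) (C q : ℝ) (hq : 0 ≤ q)
    (hb : ∀ k, ‖x k‖ ≤ C * q ^ k) (l : ℂ) (hl : q < ‖l‖) : l ∈ localResolventSet T (x 0) := by
  obtain ⟨p, hqp, hpl⟩ := exists_between hl
  have hp : 0 < p := hq.trans_lt hqp
  have hU : IsOpen {z : ℂ | p < ‖z‖} := isOpen_lt continuous_const continuous_norm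
  have hC : 0 ≤ C := by simpa using (norm_nonneg _).trans (hb 0)
  have hsum : Summable fun k : ℕ => C * p⁻¹ * (q / p) ^ k :=
    (summable_geometric_of_lt_one (by positivity) ((div_lt_one hp).2 hqp)).mul_left _
  have hbd : ∀ (k : ℕ) (z : ℂ), z ∈ {z : ℂ | p < ‖z‖} →
      ‖(z⁻¹) ^ (k + 1) • x k‖ ≤ C * p⁻¹ * (q / p) ^ k := by
    intro k z hz
    have hz : p < ‖z‖ := hz
    rw [norm_smul, norm_pow, norm_inv]
    calc (‖z‖⁻¹) ^ (k + 1) * ‖x k‖ ≤ (p⁻¹) ^ (k + 1) * (C * q ^ k) := by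
          gcongr
          exact hb k
      _ = _ := by rw [div_eq_mul_inv, mul_pow]; ring
  refine ⟨_, hU, hpl, fun z => -∑' k, (z⁻¹) ^ (k + 1) • x k, ?_, ?_⟩
  · refine DifferentiableOn.analyticOnNhd (DifferentiableOn.neg ?_) hU
    refine Complex.differentiableOn_tsum_of_summable_norm hsum (fun k z hz => ?_) hU hbd
    have hz : p < ‖z‖ := hz
    have h0 : z ≠ 0 := norm_pos_iff.1 (hp.trans hz)
    exact (((differentiableAt_inv h0).pow _).smul_const _).differentiableWithinAt
  · intro z hz
    have h0 : z ≠ 0 := norm_pos_iff.1 (hp.trans hz)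
    have hs : Summable fun k => (z⁻¹) ^ (k + 1) • x k :=
      Summable.of_norm_bounded hsum (fun k => hbd k z hz)
    have hT : T (∑' k, (z⁻¹) ^ (k + 1) • x k) = ∑' k, (z⁻¹) ^ (k + 1) • x (k + 1) := by
      rw [T.map_tsum hs]; simp [hx]
    have hz' : z • (∑' k, (z⁻¹) ^ (k + 1) • x k) = x 0 + ∑' k, (z⁻¹) ^ (k + 1) • x (k + 1) := by
      rw [← hs.tsum_const_smul]
      have : ∀ k, z • (z⁻¹) ^ (k + 1) • x k = (z⁻¹) ^ k • x k := by
        intro k; rw [smul_smul, pow_succ']; simp [h0]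
      simp_rw [this]
      rw [Summable.tsum_eq_zero_add]
      · simp
      · have h9 := hs.const_smul z
        simp_rw [this] at h9
        exact h9
    simp only [map_neg, sub_apply, smul_apply,
      one_apply_eq_self]
    rw [hT, hz']; abel

theorem lrs_inner {X : Type*} [NormedAddCommGroup X] [NormedSpace ℂ X] [CompleteSpace X]
    (T : X →L[ℂ] X) (y : ℕ → X) (hy : ∀ k, T (y (k + 1)) = y k) (C q : ℝ) (hq : 0 < q)
    (hb : ∀ k, ‖y k‖ ≤ C * (q⁻¹) ^ k) (l : ℂ) (hl : ‖l‖ < q) : l ∈ localResolventSet T (y 0) := by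
  obtain ⟨p, hlp, hpq⟩ := exists_between hl
  have hp : 0 < p := (norm_nonneg _).trans_lt hlp
  have hU : IsOpen {z : ℂ | ‖z‖ < p} := isOpen_lt continuous_norm continuous_const
  have hC : 0 ≤ C := by simpa using (norm_nonneg _).trans (hb 0)
  have hsum : Summable fun k : ℕ => C * q⁻¹ * (p / q) ^ k :=
    (summable_geometric_of_lt_one (by positivity) ((div_lt_one hq).2 hpq)).mul_left _
  have hbd : ∀ (k : ℕ) (z : ℂ), z ∈ {z : ℂ | ‖z‖ < p} →
      ‖z ^ k • y (k + 1)‖ ≤ C * q⁻¹ * (p / q) ^ k := by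
    intro k z hz
    have hz : ‖z‖ < p := hz
    rw [norm_smul, norm_pow]
    calc (‖z‖) ^ k * ‖y (k + 1)‖ ≤ p ^ k * (C * (q⁻¹) ^ (k + 1)) := by
          gcongr
          exact hb _
      _ = _ := by rw [div_eq_mul_inv, mul_pow]; ring
  refine ⟨_, hU, hlp, fun z => ∑' k, z ^ k • y (k + 1), ?_, ?_⟩
  · refine DifferentiableOn.analyticOnNhd ?_ hU
    refine Complex.differentiableOn_tsum_of_summable_norm hsum (fun k z hz => ?_) hU hbd
    exact ((differentiableAt_id.pow _).smul_const _).differentiableWithinAt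
  · intro z hz
    have hs : Summable fun k => z ^ k • y (k + 1) :=
      Summable.of_norm_bounded hsum (fun k => hbd k z hz)
    have hz' : z • (∑' k, z ^ k • y (k + 1)) = ∑' k, z ^ (k + 1) • y (k + 1) := by
      rw [← hs.tsum_const_smul]
      simp_rw [smul_smul, pow_succ']
    have hs2 : Summable fun k => z ^ k • y k := by
      have := hs.mapL T
      simpa [hy] using this
    have hT : T (∑' k, z ^ k • y (k + 1)) = y 0 + ∑' k, z ^ (k + 1) • y (k + 1) := by
      rw [T.map_tsum hs]; simp only [map_smul, hy]
      rw [hs2.tsum_eq_zero_add]; simp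
    simp only [sub_apply, smul_apply,
      one_apply_eq_self]
    rw [hT, hz']; abel

theorem exists_not_surj {H : Type*} [NormedAddCommGroup H] [InnerProductSpace ℂ H] [CompleteSpace H]
    [Nontrivial H] (S : H →L[ℂ] H)
    (h : ∀ z : ℂ, Function.Surjective (S - z • (1 : H →L[ℂ] H))) : False := by
  have hcl : IsClopen (spectrum ℂ S) := by
    refine ⟨spectrum.isClosed S, ?_⟩
    rw [← isClosed_compl_iff, ← closure_subset_iff_isClosed]
    intro m hm
    set T := S - m • (1 : H →L[ℂ] H) with hT
    obtain ⟨R, hR⟩ : ∃ R : H →L[ℂ] H, T * R = 1 := by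
      let T' : (T.ker)ᗮ →L[ℂ] H := T ∘L (T.ker)ᗮ.subtypeL
      have : CompleteSpace T.ker := T.isClosed_ker.completeSpace_coe
      have hinj : T'.ker = ⊥ := by
        rw [LinearMap.ker_eq_bot']
        intro x hx
        have h1 : (x : H) ∈ T.ker := hx
        have := x.2 _ h1
        ext
        simpa using this
      have hsurj : T'.range = ⊤ := by
        rw [LinearMap.range_eq_top]
        intro y
        obtain ⟨x, hx⟩ := h m y
        obtain ⟨u, hu, v, hv, huv⟩ := Submodule.exists_add_mem_mem_orthogonal (K := T.ker) x
        refine ⟨⟨v, hv⟩, ?_⟩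
        have hu : T u = 0 := hu
        change T v = y
        rw [← hx, huv, map_add]
        change T v = T u + T v
        rw [hu, zero_add]
      let E := ContinuousLinearEquiv.ofBijective T' hinj hsurj
      refine ⟨(T.ker)ᗮ.subtypeL ∘L (E.symm : H →L[ℂ] _), ?_⟩
      ext y
      exact E.apply_symm_apply y
    have hpos : 0 < 1 / (‖R‖ + 1) := by positivity
    obtain ⟨v, hv, hd⟩ := Metric.mem_closure_iff.1 hm _ hpos
    have hv' : IsUnit (algebraMap ℂ (H →L[ℂ] H) v - S) := not_not.1 hv
    have h1 : (S - algebraMap ℂ _ v) * R = 1 - (v - m) • R := by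
      have : S - algebraMap ℂ _ v = T - (v - m) • (1 : H →L[ℂ] H) := by
        rw [hT, Algebra.algebraMap_eq_smul_one, sub_smul]; abel
      rw [this, sub_mul, hR]; simp
    have h2 : IsUnit ((S - algebraMap ℂ _ v) * R) := by
      rw [h1]
      refine isUnit_one_sub_of_norm_lt_one ?_
      rw [norm_smul, ← dist_eq_norm, dist_comm]
      calc dist m v * ‖R‖ ≤ 1 / (‖R‖ + 1) * ‖R‖ := by gcongr
        _ < 1 := by
          rw [div_mul_eq_mul_div, div_lt_one (by positivity)]; linarith
    have h3 : IsUnit (S - algebraMap ℂ (H →L[ℂ] H) v) := by rwa [IsUnit.sub_iff]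
    have h4 : IsUnit R := by
      obtain ⟨u, hu⟩ := h3
      rw [← hu] at h2
      exact (Units.isUnit_units_mul u R).1 h2
    have h5 : IsUnit T := by
      obtain ⟨u, rfl⟩ := h4
      have : T = ↑u⁻¹ := (Units.mul_eq_one_iff_eq_inv).1 hR
      rw [this]; exact u⁻¹.isUnit
    rw [Set.mem_compl_iff, spectrum.notMem_iff, IsUnit.sub_iff, Algebra.algebraMap_eq_smul_one]
    exact h5
  rcases isClopen_iff.1 hcl with h0 | h0
  · exact (spectrum.nonempty S).ne_empty h0
  · have := spectrum.isCompact (𝕜 := ℂ) S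
    rw [h0] at this
    exact noncompact_univ ℂ this

theorem ev_bound (u : ℕ → ℝ) (hu : ∀ n, 0 ≤ u n) (q : ℝ) (hq : 0 < q)
    (h : ∀ᶠ n in atTop, u n ≤ q ^ n) : ∃ C : ℝ, 0 < C ∧ ∀ n, u n ≤ C * q ^ n := by
  obtain ⟨N, hN⟩ := eventually_atTop.1 h
  have hnn : ∀ n, 0 ≤ u n / q ^ n := fun n => div_nonneg (hu n) (by positivity)
  have hs : 0 ≤ ∑ i ∈ Finset.range N, u i / q ^ i := Finset.sum_nonneg fun i _ => hnn i
  refine ⟨1 + ∑ i ∈ Finset.range N, u i / q ^ i, by positivity, fun n => ?_⟩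
  have hqn : 0 < q ^ n := by positivity
  rw [← div_le_iff₀ hqn]
  rcases lt_or_ge n N with hn | hn
  · have := Finset.single_le_sum (f := fun i => u i / q ^ i) (fun i _ => hnn i)
      (Finset.mem_range.2 hn)
    linarith
  · have : u n / q ^ n ≤ 1 := (div_le_one hqn).2 (hN n hn)
    linarith

theorem root_bd (u : ℕ → ℝ) (hu : ∀ n, 0 ≤ u n) (M : ℝ) (hM : 0 < M) (h : ∀ n, u n ≤ M ^ n) (n : ℕ) :
    u n ^ ((n : ℝ)⁻¹) ≤ max M 1 := by
  rcases Nat.eq_zero_or_pos n with rfl | hn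
  · simp
  · refine le_max_of_le_left ?_
    calc u n ^ ((n : ℝ)⁻¹) ≤ (M ^ n) ^ ((n : ℝ)⁻¹) :=
          Real.rpow_le_rpow (hu n) (h n) (by positivity)
      _ = M := Real.pow_rpow_inv_natCast hM.le hn.ne'

theorem root_bdd_above (u : ℕ → ℝ) (hu : ∀ n, 0 ≤ u n) (M : ℝ) (hM : 0 < M) (h : ∀ n, u n ≤ M ^ n) :
    atTop.IsBoundedUnder (· ≤ ·) fun n : ℕ => u n ^ ((n : ℝ)⁻¹) :=
  isBoundedUnder_of ⟨_, root_bd u hu M hM h⟩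

theorem root_bdd_below (u : ℕ → ℝ) (hu : ∀ n, 0 ≤ u n) :
    atTop.IsBoundedUnder (· ≥ ·) fun n : ℕ => u n ^ ((n : ℝ)⁻¹) :=
  isBoundedUnder_of ⟨0, fun n => Real.rpow_nonneg (hu n) _⟩

theorem root_tendsto (C t : ℝ) (hC : 0 < C) :
    Tendsto (fun n : ℕ => C ^ ((n : ℝ)⁻¹) * t) atTop (nhds t) := by
  have h1 : Tendsto (fun n : ℕ => ((n : ℝ)⁻¹)) atTop (nhds 0) := tendsto_inv_atTop_nhds_zero_nat
  have h2 : Tendsto (fun n : ℕ => C ^ ((n : ℝ)⁻¹)) atTop (nhds (C ^ (0 : ℝ))) :=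
    (Real.continuousAt_const_rpow hC.ne').tendsto.comp h1
  simpa using h2.mul_const t

theorem root_mul (C t : ℝ) (hC : 0 < C) (ht : 0 < t) (n : ℕ) (hn : n ≠ 0) :
    (C * t ^ n) ^ ((n : ℝ)⁻¹) = C ^ ((n : ℝ)⁻¹) * t := by
  rw [Real.mul_rpow hC.le (by positivity), Real.pow_rpow_inv_natCast ht.le hn]

theorem limsup_root_le (u : ℕ → ℝ) (hu : ∀ n, 0 ≤ u n) (C t : ℝ) (hC : 0 < C) (ht : 0 < t)
    (h : ∀ n, u n ≤ C * t ^ n) : (atTop.limsup fun n : ℕ => u n ^ ((n : ℝ)⁻¹)) ≤ t := by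
  rw [← (root_tendsto C t hC).limsup_eq]
  refine limsup_le_limsup ?_ ((root_bdd_below u hu).isCoboundedUnder_le)
    (root_tendsto C t hC).isBoundedUnder_le
  filter_upwards [eventually_ne_atTop 0] with n hn
  rw [← root_mul C t hC ht n hn]
  exact Real.rpow_le_rpow (hu n) (h n) (by positivity)

theorem le_liminf_root (u : ℕ → ℝ) (hu : ∀ n, 0 ≤ u n) (M : ℝ) (hM : 0 < M) (hb : ∀ n, u n ≤ M ^ n)
    (C t : ℝ) (hC : 0 < C) (ht : 0 < t)
    (h : ∀ n, C * t ^ n ≤ u n) : t ≤ (atTop.liminf fun n : ℕ => u n ^ ((n : ℝ)⁻¹)) := by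
  rw [← (root_tendsto C t hC).liminf_eq]
  refine liminf_le_liminf ?_ (root_tendsto C t hC).isBoundedUnder_ge
    ((root_bdd_above u hu M hM hb).isCoboundedUnder_ge)
  filter_upwards [eventually_ne_atTop 0] with n hn
  rw [← root_mul C t hC ht n hn]
  exact Real.rpow_le_rpow (by positivity) (h n) (by positivity)

theorem limsup_root_nonneg (u : ℕ → ℝ) (hu : ∀ n, 0 ≤ u n) (M : ℝ) (hM : 0 < M)
    (hb : ∀ n, u n ≤ M ^ n) : 0 ≤ (atTop.limsup fun n : ℕ => u n ^ ((n : ℝ)⁻¹)) :=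
  le_limsup_of_frequently_le (Frequently.of_forall fun n => Real.rpow_nonneg (hu n) _)
    (root_bdd_above u hu M hM hb)

theorem liminf_root_nonneg (u : ℕ → ℝ) (hu : ∀ n, 0 ≤ u n) (M : ℝ) (hM : 0 < M)
    (hb : ∀ n, u n ≤ M ^ n) : 0 ≤ (atTop.liminf fun n : ℕ => u n ^ ((n : ℝ)⁻¹)) :=
  le_liminf_of_le (root_bdd_above u hu M hM hb).isCoboundedUnder_ge
    (Eventually.of_forall fun n => Real.rpow_nonneg (hu n) _)

theorem bound_of_limsup_lt (u : ℕ → ℝ) (hu : ∀ n, 0 ≤ u n) (M : ℝ) (hM : 0 < M)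
    (hb : ∀ n, u n ≤ M ^ n) (q : ℝ) (hq : (atTop.limsup fun n : ℕ => u n ^ ((n : ℝ)⁻¹)) < q) :
    ∃ C : ℝ, 0 < C ∧ ∀ n, u n ≤ C * q ^ n := by
  have hq0 := (limsup_root_nonneg u hu M hM hb).trans_lt hq
  refine ev_bound u hu q hq0 ?_
  filter_upwards [eventually_lt_of_limsup_lt hq (root_bdd_above u hu M hM hb),
    eventually_ne_atTop 0] with n hn hn0
  calc u n = (u n ^ ((n : ℝ)⁻¹)) ^ n := (Real.rpow_inv_natCast_pow (hu n) hn0).symm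
    _ ≤ q ^ n := pow_le_pow_left₀ (Real.rpow_nonneg (hu n) _) hn.le n

theorem bound_of_lt_liminf (u : ℕ → ℝ) (hu : ∀ n, 0 < u n) (q : ℝ) (hq0 : 0 < q)
    (hq : q < (atTop.liminf fun n : ℕ => u n ^ ((n : ℝ)⁻¹))) :
    ∃ C : ℝ, 0 < C ∧ ∀ n, (u n)⁻¹ ≤ C * (q⁻¹) ^ n := by
  refine ev_bound (fun n => (u n)⁻¹) (fun n => (inv_pos.2 (hu n)).le) q⁻¹ (inv_pos.2 hq0) ?_
  filter_upwards [eventually_lt_of_lt_liminf hq (root_bdd_below u fun n => (hu n).le),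
    eventually_ne_atTop 0] with n hn hn0
  rw [inv_pow]
  refine inv_anti₀ (by positivity) ?_
  calc q ^ n ≤ (u n ^ ((n : ℝ)⁻¹)) ^ n := pow_le_pow_left₀ hq0.le hn.le n
    _ = u n := (Real.rpow_inv_natCast_pow (hu n).le hn0)

theorem bound_of_spectralRadius_lt {A : Type*} [NormedRing A] [NormedAlgebra ℂ A] [CompleteSpace A]
    (a : A) (t : ℝ) (ht : 0 < t) (h : spectralRadius ℂ a < ENNReal.ofReal t) :
    ∃ C : ℝ, 0 < C ∧ ∀ n, ‖a ^ n‖ ≤ C * t ^ n := by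
  refine ev_bound (fun n => ‖a ^ n‖) (fun n => norm_nonneg _) t ht ?_
  filter_upwards [(spectrum.pow_norm_pow_one_div_tendsto_nhds_spectralRadius a).eventually_lt_const h,
    eventually_ne_atTop 0] with n hn hn0
  rw [ENNReal.ofReal_lt_ofReal_iff ht, one_div] at hn
  calc ‖a ^ n‖ = (‖a ^ n‖ ^ ((n : ℝ)⁻¹)) ^ n := (Real.rpow_inv_natCast_pow (norm_nonneg _) hn0).symm
    _ ≤ t ^ n := pow_le_pow_left₀ (Real.rpow_nonneg (norm_nonneg _) _) hn.le n

theorem shift_coord {H : Type*} [NormedAddCommGroup H] [InnerProductSpace ℂ H] [CompleteSpace H]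
    (S : H →L[ℂ] H) (e : HilbertBasis ℤ ℂ H) (ω : ℤ → ℝ)
    (hS : ∀ n, S (e n) = (ω n : ℂ) • e (n + 1)) (x : H) (n : ℤ) :
    inner ℂ (e (n + 1)) (S x) = (ω n : ℂ) * inner ℂ (e n) x := by
  have hd : Dense ((Submodule.span ℂ (Set.range e) : Submodule ℂ H) : Set H) :=
    Submodule.dense_iff_topologicalClosure_eq_top.2 e.dense_span
  have : (innerSL ℂ (e (n + 1))) ∘L S = (ω n : ℂ) • innerSL ℂ (e n) := by
    refine ContinuousLinearMap.ext_on hd ?_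
    rintro _ ⟨m, rfl⟩
    have ho := orthonormal_iff_ite.1 e.orthonormal
    simp only [ContinuousLinearMap.comp_apply, innerSL_apply_apply, smul_apply, hS,
      inner_smul_right, ho, smul_eq_mul]
    by_cases h : n = m <;> simp [h]
  exact congrArg (fun f => f x) this

theorem coord_zero {H : Type*} [NormedAddCommGroup H] [InnerProductSpace ℂ H] [CompleteSpace H]
    (e : HilbertBasis ℤ ℂ H) (x : H) (h : ∀ n, inner ℂ (e n) x = 0) : x = 0 := by
  apply e.repr.injective
  ext n
  simp [e.repr_apply_apply, h]

theorem shift_kernel {H : Type*} [NormedAddCommGroup H] [InnerProductSpace ℂ H] [CompleteSpace H]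
    (S : H →L[ℂ] H) (e : HilbertBasis ℤ ℂ H) (ω : ℤ → ℝ) (hpos : ∀ n, 0 < ω n)
    (hS : ∀ n, S (e n) = (ω n : ℂ) • e (n + 1)) (x : H) (hx : x ≠ 0) (m : ℂ) (hm : S x = m • x) :
    0 < ‖m‖ ∧ ∃ C : ℝ, 0 < C ∧
      (∀ n : ℕ, ∏ i ∈ Finset.range n, ω (i : ℤ) ≤ C * ‖m‖ ^ n) ∧
      (∀ n : ℕ, C⁻¹ * ‖m‖ ^ n ≤ ∏ i ∈ Finset.range n, ω (-(i : ℤ) - 1)) := by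
  have hc : ∀ n, m * inner ℂ (e (n + 1)) x = (ω n : ℂ) * inner ℂ (e n) x := by
    intro n
    rw [← shift_coord S e ω hS, hm, inner_smul_right]
  have hω : ∀ n, (ω n : ℂ) ≠ 0 := fun n => by exact_mod_cast (hpos n).ne'
  have hm0 : m ≠ 0 := by
    rintro rfl
    refine hx (coord_zero e x fun n => ?_)
    have := hc n
    simpa [(hpos n).ne'] using this
  have hup : ∀ n : ℕ, m ^ n * inner ℂ (e n) x =
      ((∏ i ∈ Finset.range n, ω (i : ℤ) : ℝ) : ℂ) * inner ℂ (e 0) x := by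
    intro n
    induction n with
    | zero => simp
    | succ k ih =>
      rw [Finset.prod_range_succ, pow_succ]
      push_cast at ih ⊢
      rw [mul_assoc, hc k]
      linear_combination (ω k : ℂ) * ih
  have hdn : ∀ n : ℕ, m ^ n * inner ℂ (e 0) x =
      ((∏ i ∈ Finset.range n, ω (-(i : ℤ) - 1) : ℝ) : ℂ) * inner ℂ (e (-(n : ℤ))) x := by
    intro n
    induction n with
    | zero => simp
    | succ k ih =>
      have h1 := hc (-(k : ℤ) - 1)
      rw [sub_add_cancel] at h1
      rw [Finset.prod_range_succ, pow_succ]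
      have h2 : -((k + 1 : ℕ) : ℤ) = -(k : ℤ) - 1 := by push_cast; ring
      rw [h2]
      push_cast at ih ⊢
      linear_combination m * ih + (∏ i ∈ Finset.range k, (ω (-(i : ℤ) - 1) : ℂ)) * h1
  have hp1 : ∀ n : ℕ, 0 < ∏ i ∈ Finset.range n, ω (i : ℤ) := fun n => Finset.prod_pos fun i _ => hpos _
  have hp2 : ∀ n : ℕ, 0 < ∏ i ∈ Finset.range n, ω (-(i : ℤ) - 1) :=
    fun n => Finset.prod_pos fun i _ => hpos _
  have h0 : inner ℂ (e 0) x ≠ 0 := by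
    intro h0
    refine hx (coord_zero e x fun n => ?_)
    obtain ⟨k, rfl | rfl⟩ := n.eq_nat_or_neg
    · have := hup k
      rw [h0, mul_zero] at this
      exact (mul_eq_zero.1 this).resolve_left (pow_ne_zero _ hm0)
    · have := hdn k
      rw [h0, mul_zero] at this
      refine (mul_eq_zero.1 this.symm).resolve_left ?_
      exact_mod_cast (hp2 k).ne'
  have hle : ∀ n, ‖inner ℂ (e n) x‖ ≤ ‖x‖ := by
    intro n
    simpa [e.orthonormal.1 n] using norm_inner_le_norm (𝕜 := ℂ) (e n) x
  have h0' : 0 < ‖inner ℂ (e 0) x‖ := norm_pos_iff.2 h0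
  have hx' : 0 < ‖x‖ := norm_pos_iff.2 hx
  refine ⟨norm_pos_iff.2 hm0, ‖x‖ / ‖inner ℂ (e 0) x‖, by positivity, fun n => ?_, fun n => ?_⟩
  · have := congrArg norm (hup n)
    rw [norm_mul, norm_mul, norm_pow, Complex.norm_real, Real.norm_of_nonneg (hp1 n).le] at this
    rw [div_mul_eq_mul_div, le_div_iff₀ h0', ← this, mul_comm ‖x‖]
    gcongr
    exact hle _
  · have := congrArg norm (hdn n)
    rw [norm_mul, norm_mul, norm_pow, Complex.norm_real, Real.norm_of_nonneg (hp2 n).le] at this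
    rw [inv_div, div_mul_eq_mul_div, div_le_iff₀ hx', mul_comm, this]
    gcongr
    · exact (hp2 n).le
    · exact hle _

theorem basis_lrs {H : Type*} [NormedAddCommGroup H] [InnerProductSpace ℂ H] [CompleteSpace H]
    (S : H →L[ℂ] H) (e : HilbertBasis ℤ ℂ H) (ω : ℤ → ℝ) (hpos : ∀ n, 0 < ω n)
    (hS : ∀ n, S (e n) = (ω n : ℂ) • e (n + 1)) (l : ℂ)
    (h : (l ≠ 0 ∧ l ∈ localResolventSet S (e 0)) ∨
      (∀ k : ℕ, l ∈ localResolventSet S (e (-(k : ℤ))))) (n : ℤ) :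
    l ∈ localResolventSet S (e n) := by
  have hω : ∀ n, (ω n : ℂ) ≠ 0 := fun n => by exact_mod_cast (hpos n).ne'
  have hup : ∀ n, l ∈ localResolventSet S (e n) → l ∈ localResolventSet S (e (n + 1)) := by
    intro n hn
    have h1 := lrs_smul S _ (ω n : ℂ)⁻¹ l (lrs_up S _ l hn)
    rwa [hS, smul_smul, inv_mul_cancel₀ (hω n), one_smul] at h1
  have hdown : l ≠ 0 → ∀ n, l ∈ localResolventSet S (e (n + 1)) → l ∈ localResolventSet S (e n) := by
    intro hl n hn
    refine lrs_down S _ l hl ?_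
    rw [hS]
    exact lrs_smul S _ _ l hn
  have hneg : ∀ k : ℕ, l ∈ localResolventSet S (e (-(k : ℤ))) := by
    rcases h with ⟨hl, h0⟩ | h
    · intro k
      induction k with
      | zero => simpa using h0
      | succ k ih =>
        refine hdown hl _ ?_
        have : -((k + 1 : ℕ) : ℤ) + 1 = -(k : ℤ) := by push_cast; ring
        rwa [this]
    · exact h
  have hp : ∀ k : ℕ, l ∈ localResolventSet S (e (k : ℤ)) := by
    intro k
    induction k with
    | zero => simpa using hneg 0
    | succ k ih => simpa using hup _ ih
  obtain ⟨k, rfl | rfl⟩ := n.eq_nat_or_neg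
  · exact hp k
  · exact hneg k

theorem fwd_seq {H : Type*} [NormedAddCommGroup H] [InnerProductSpace ℂ H] [CompleteSpace H]
    (S : H →L[ℂ] H) (e : HilbertBasis ℤ ℂ H) (ω : ℤ → ℝ)
    (hS : ∀ n, S (e n) = (ω n : ℂ) • e (n + 1)) (k : ℕ) :
    ((∏ i ∈ Finset.range (k + 1), ω (i : ℤ) : ℝ) : ℂ) • e ((k + 1 : ℕ) : ℤ) =
      S (((∏ i ∈ Finset.range k, ω (i : ℤ) : ℝ) : ℂ) • e (k : ℤ)) := by
  rw [map_smul, hS, smul_smul, Finset.prod_range_succ]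
  push_cast
  rfl

theorem bwd_seq {H : Type*} [NormedAddCommGroup H] [InnerProductSpace ℂ H] [CompleteSpace H]
    (S : H →L[ℂ] H) (e : HilbertBasis ℤ ℂ H) (ω : ℤ → ℝ) (hpos : ∀ n, 0 < ω n)
    (hS : ∀ n, S (e n) = (ω n : ℂ) • e (n + 1)) (k : ℕ) :
    S (((∏ i ∈ Finset.range (k + 1), ω (-(i : ℤ) - 1) : ℝ) : ℂ)⁻¹ • e (-((k + 1 : ℕ) : ℤ))) =
      ((∏ i ∈ Finset.range k, ω (-(i : ℤ) - 1) : ℝ) : ℂ)⁻¹ • e (-(k : ℤ)) := by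
  have hω : ∀ n, (ω n : ℂ) ≠ 0 := fun n => by exact_mod_cast (hpos n).ne'
  have h2 : -((k + 1 : ℕ) : ℤ) = -(k : ℤ) - 1 := by push_cast; ring
  rw [map_smul, hS, smul_smul, Finset.prod_range_succ, h2, sub_add_cancel, Complex.ofReal_mul,
    mul_inv, mul_assoc, inv_mul_cancel₀ (hω _), mul_one]

theorem bilateral_dunfordC (S : H →L[ℂ] H)
    (e : HilbertBasis ℤ ℂ H) (ω : ℤ → ℝ) (hpos : ∀ n, 0 < ω n)
    (hbd : ∃ M : ℝ, ∀ n, ω n ≤ M)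
    (hS : ∀ n, S (e n) = (ω n : ℂ) • e (n + 1))
    (hC : DunfordConditionC S)
    (r₂m r₃p : ℝ)
    (hr₂m : r₂m = atTop.liminf fun n : ℕ =>
      (∏ i ∈ Finset.range n, ω (-(i : ℤ) - 1)) ^ ((n : ℝ)⁻¹))
    (hr₃p : r₃p = atTop.limsup fun n : ℕ =>
      (∏ i ∈ Finset.range n, ω (i : ℤ)) ^ ((n : ℝ)⁻¹)) :
    r₂m ≤ r₃p ∧
    spectrum ℂ S ⊆ {μ : ℂ | r₂m ≤ ‖μ‖ ∧ ‖μ‖ ≤ r₃p} ∧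
    r₃p = (spectralRadius ℂ S).toReal ∧
    (IsUnit S → r₂m = 1 / (spectralRadius ℂ (Ring.inverse S)).toReal) ∧
    (¬ IsUnit S → r₂m = 0) := by
  obtain ⟨M, hM⟩ := hbd
  have hM0 : 0 < M := (hpos 0).trans_le (hM 0)
  set a : ℕ → ℝ := fun n => ∏ i ∈ Finset.range n, ω (i : ℤ) with ha
  set b : ℕ → ℝ := fun n => ∏ i ∈ Finset.range n, ω (-(i : ℤ) - 1) with hb
  have ha0 : ∀ n, 0 < a n := fun n => Finset.prod_pos fun i _ => hpos _
  have hb0 : ∀ n, 0 < b n := fun n => Finset.prod_pos fun i _ => hpos _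
  have haM : ∀ n, a n ≤ M ^ n := fun n => by
    simpa using Finset.prod_le_prod (s := Finset.range n) (f := fun i : ℕ => ω (i : ℤ))
      (g := fun _ => M) (fun i _ => (hpos _).le) (fun i _ => hM _)
  have hbM : ∀ n, b n ≤ M ^ n := fun n => by
    simpa using Finset.prod_le_prod (s := Finset.range n) (f := fun i : ℕ => ω (-(i : ℤ) - 1))
      (g := fun _ => M) (fun i _ => (hpos _).le) (fun i _ => hM _)
  have hr3 : 0 ≤ r₃p := by
    rw [hr₃p]; exact limsup_root_nonneg a (fun n => (ha0 n).le) M hM0 haM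
  have hr2 : 0 ≤ r₂m := by
    rw [hr₂m]; exact liminf_root_nonneg b (fun n => (hb0 n).le) M hM0 hbM
  have hen : ∀ n, ‖e n‖ = 1 := e.orthonormal.1
  have hnt : Nontrivial H := ⟨e 0, 0, fun h => by have := hen 0; simp [h] at this⟩
  have hxn : ∀ k : ℕ, ‖((a k : ℝ) : ℂ) • e (k : ℤ)‖ = a k := fun k => by
    rw [norm_smul, hen, Complex.norm_real, Real.norm_of_nonneg (ha0 k).le, mul_one]
  have hyn : ∀ k : ℕ, ‖((b k : ℝ) : ℂ)⁻¹ • e (-(k : ℤ))‖ = (b k)⁻¹ := fun k => by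
    rw [norm_smul, hen, norm_inv, Complex.norm_real, Real.norm_of_nonneg (hb0 k).le, mul_one]
  have hfwd := fwd_seq S e ω hS
  have hbwd := bwd_seq S e ω hpos hS
  -- local resolvent of basis vectors
  have hloc : ∀ l : ℂ, (‖l‖ < r₂m ∨ r₃p < ‖l‖) → ∀ n, l ∈ localResolventSet S (e n) := by
    intro l hl
    refine basis_lrs S e ω hpos hS l ?_
    rcases hl with hl | hl
    · right
      obtain ⟨q, hq1, hq2⟩ := exists_between hl
      have hq0 : 0 < q := (norm_nonneg _).trans_lt hq1
      rw [hr₂m] at hq2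
      obtain ⟨C, hC0, hCb⟩ := bound_of_lt_liminf b hb0 q hq0 hq2
      intro m
      have h1 := lrs_inner S (fun k => ((b (k + m) : ℝ) : ℂ)⁻¹ • e (-((k + m : ℕ) : ℤ)))
        (fun k => by
          have := hbwd (k + m)
          rw [show k + 1 + m = k + m + 1 by ring]
          exact this) (C * (q⁻¹) ^ m) q hq0
        (fun k => by
          rw [hyn]
          refine (hCb _).trans (le_of_eq ?_)
          rw [pow_add]; ring) l hq1
      have h2 := lrs_smul S _ ((b m : ℝ) : ℂ) l h1
      have hbm : ((b m : ℝ) : ℂ) ≠ 0 := by exact_mod_cast (hb0 m).ne'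
      simpa [smul_smul, hbm] using h2
    · left
      refine ⟨norm_pos_iff.1 (hr3.trans_lt hl), ?_⟩
      obtain ⟨q, hq1, hq2⟩ := exists_between hl
      have hq0 : 0 ≤ q := hr3.trans hq1.le
      rw [hr₃p] at hq1
      obtain ⟨C, hC0, hCb⟩ := bound_of_limsup_lt a (fun n => (ha0 n).le) M hM0 haM q hq1
      have h1 := lrs_outer S (fun k => ((a k : ℝ) : ℂ) • e (k : ℤ)) hfwd C q hq0
        (fun k => by rw [hxn]; exact hCb k) l hq2
      simpa [ha] using h1
  -- condition (C)
  have hall : ∀ x : H, localSpectrum S x ⊆ {μ : ℂ | r₂m ≤ ‖μ‖ ∧ ‖μ‖ ≤ r₃p} := by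
    have hF : IsClosed {μ : ℂ | r₂m ≤ ‖μ‖ ∧ ‖μ‖ ≤ r₃p} :=
      (isClosed_le continuous_const continuous_norm).inter
        (isClosed_le continuous_norm continuous_const)
    have hcl := hC _ hF
    have hd : Dense ((Submodule.span ℂ (Set.range e) : Submodule ℂ H) : Set H) :=
      Submodule.dense_iff_topologicalClosure_eq_top.2 e.dense_span
    have hsub : ((Submodule.span ℂ (Set.range e) : Submodule ℂ H) : Set H) ⊆
        {x | localSpectrum S x ⊆ {μ : ℂ | r₂m ≤ ‖μ‖ ∧ ‖μ‖ ≤ r₃p}} := by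
      intro x hx l hl
      by_contra hlA
      have hlA' : ‖l‖ < r₂m ∨ r₃p < ‖l‖ := by
        by_contra hcon
        push Not at hcon
        exact hlA hcon
      refine hl ?_
      replace hx : x ∈ Submodule.span ℂ (Set.range e) := hx
      clear hl
      induction hx using Submodule.span_induction with
      | mem x hx => obtain ⟨n, rfl⟩ := hx; exact hloc l hlA' n
      | zero => exact lrs_zero S l
      | add x y _ _ h1 h2 => exact lrs_add S x y l h1 h2
      | smul c x _ h1 => exact lrs_smul S x c l h1
    intro x
    exact (closure_minimal hsub hcl) (hd x)
  have hsurj : ∀ l : ℂ, l ∉ {μ : ℂ | r₂m ≤ ‖μ‖ ∧ ‖μ‖ ≤ r₃p} →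
      Function.Surjective (S - l • (1 : H →L[ℂ] H)) := by
    intro l hl x
    have : l ∈ localResolventSet S x := not_not.1 fun h => hl (hall x h)
    obtain ⟨U, _, hlU, f, _, hf⟩ := this
    exact ⟨f l, hf l hlU⟩
  have h23 : r₂m ≤ r₃p := by
    by_contra hcon
    push Not at hcon
    refine exists_not_surj S fun z => hsurj z ?_
    rintro ⟨h1, h2⟩
    linarith
  have hspec : spectrum ℂ S ⊆ {μ : ℂ | r₂m ≤ ‖μ‖ ∧ ‖μ‖ ≤ r₃p} := by
    intro l hl
    by_contra hlA
    refine hl ?_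
    rw [spectrum.mem_resolventSet_iff, IsUnit.sub_iff, Algebra.algebraMap_eq_smul_one,
      ContinuousLinearMap.isUnit_iff_bijective]
    refine ⟨?_, hsurj l hlA⟩
    rw [injective_iff_map_eq_zero]
    intro x hx
    by_contra hx0
    have hx' : S x = l • x := by
      simpa [sub_eq_zero] using hx
    obtain ⟨hl0, C, hC0, h1, h2⟩ := shift_kernel S e ω hpos hS x hx0 l hx'
    have h3 := limsup_root_le a (fun n => (ha0 n).le) C ‖l‖ hC0 hl0 h1
    have h4 := le_liminf_root b (fun n => (hb0 n).le) M hM0 hbM C⁻¹ ‖l‖ (inv_pos.2 hC0) hl0 h2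
    rw [← hr₃p] at h3
    rw [← hr₂m] at h4
    exact hlA ⟨by linarith, by linarith⟩
  refine ⟨h23, hspec, ?_, ?_, ?_⟩
  · obtain ⟨k, hk, hkr⟩ := spectrum.exists_nnnorm_eq_spectralRadius S
    rw [← hkr]
    simp only [ENNReal.coe_toReal, coe_nnnorm]
    refine le_antisymm ?_ (hspec hk).2
    refine le_of_forall_gt_imp_ge_of_dense fun t ht => ?_
    have ht0 : 0 < t := (norm_nonneg _).trans_lt ht
    obtain ⟨C, hC0, hCb⟩ := bound_of_spectralRadius_lt S t ht0 (by
      rw [← hkr, ← ENNReal.ofReal_coe_nnreal, coe_nnnorm]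
      exact (ENNReal.ofReal_lt_ofReal_iff ht0).2 ht)
    rw [hr₃p]
    refine limsup_root_le a (fun n => (ha0 n).le) C t hC0 ht0 fun n => le_trans ?_ (hCb n)
    have : (S ^ n) (e 0) = ((a n : ℝ) : ℂ) • e (n : ℤ) := by
      induction n with
      | zero => simp [ha]
      | succ k ih => rw [pow_succ', ContinuousLinearMap.mul_apply, ih]; exact (hfwd k).symm
    have h1 := (S ^ n).le_opNorm (e 0)
    rwa [this, hxn, hen, mul_one] at h1
  · rintro ⟨u, rfl⟩
    rw [Ring.inverse_unit]
    obtain ⟨k, hk, hkr⟩ := spectrum.exists_nnnorm_eq_spectralRadius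
      ((u⁻¹ : (H →L[ℂ] H)ˣ) : H →L[ℂ] H)
    rw [← hkr]
    simp only [ENNReal.coe_toReal, coe_nnnorm]
    have hk0 : k ≠ 0 := by
      rintro rfl
      exact hk (spectrum.zero_mem_resolventSet_of_unit _)
    have hkn : 0 < ‖k‖ := norm_pos_iff.2 hk0
    refine le_antisymm ?_ ?_
    · have h1 : k⁻¹ ∈ spectrum ℂ (u : H →L[ℂ] H) := by
        rw [← spectrum.inv₀_mem_inv_iff, inv_inv]; exact hk
      have h2 := (hspec h1).1
      rwa [norm_inv, ← one_div] at h2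
    · have key : ∀ t, ‖k‖ < t → t⁻¹ ≤ r₂m := by
        intro t ht
        have ht0 : 0 < t := (norm_nonneg _).trans_lt ht
        obtain ⟨C, hC0, hCb⟩ := bound_of_spectralRadius_lt
          ((u⁻¹ : (H →L[ℂ] H)ˣ) : H →L[ℂ] H) t ht0 (by
          rw [← hkr, ← ENNReal.ofReal_coe_nnreal, coe_nnnorm]
          exact (ENNReal.ofReal_lt_ofReal_iff ht0).2 ht)
        rw [hr₂m]
        refine le_liminf_root b (fun n => (hb0 n).le) M hM0 hbM C⁻¹ t⁻¹ (inv_pos.2 hC0)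
          (inv_pos.2 ht0) fun n => ?_
        have hinv : ∀ y : H, ((u⁻¹ : (H →L[ℂ] H)ˣ) : H →L[ℂ] H) ((u : H →L[ℂ] H) y) = y := by
          intro y
          rw [← ContinuousLinearMap.mul_apply, Units.inv_mul]; rfl
        have : (((u⁻¹ : (H →L[ℂ] H)ˣ) : H →L[ℂ] H) ^ n) (e 0) =
            ((b n : ℝ) : ℂ)⁻¹ • e (-(n : ℤ)) := by
          induction n with
          | zero => simp [hb]
          | succ k ih =>
            rw [pow_succ', ContinuousLinearMap.mul_apply, ih]
            refine Eq.trans ?_ (hinv _)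
            exact congrArg _ (hbwd k).symm
        have h1 := (((u⁻¹ : (H →L[ℂ] H)ˣ) : H →L[ℂ] H) ^ n).le_opNorm (e 0)
        rw [this, hyn, hen, mul_one] at h1
        have h2 := h1.trans (hCb n)
        rw [inv_pow, ← mul_inv]
        exact inv_le_of_inv_le₀ (hb0 n) h2
      by_contra hcon
      push Not at hcon
      have hr2' : r₂m < ‖k‖⁻¹ := by rwa [one_div] at hcon
      obtain ⟨s, hs1, hs2⟩ := exists_between hr2'
      have hs0 : 0 < s := hr2.trans_lt hs1
      have h3 := key s⁻¹ ((lt_inv_comm₀ hkn hs0).2 hs2)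
      rw [inv_inv] at h3
      linarith
  · intro hnu
    have h0 : (0 : ℂ) ∈ spectrum ℂ S := by
      rw [spectrum.zero_mem_iff]; exact hnu
    have := (hspec h0).1
    rw [norm_zero] at this
    exact le_antisymm this hr2
end

section
/- If a bilateral weighted shift S with positive bounded weights is decomposable, then either S is quasi-nilpotent, or S is invertible and its spectrum is the circle {λ : |λ| = r(S)}; in particular r₁(S) = r(S). -/
open Filter

section Defs

variable {X : Type*} [NormedAddCommGroup X] [NormedSpace ℂ X]

/-- `T` possesses Bishop's property (β). -/
def HasBishopBeta (T : X →L[ℂ] X) : Prop :=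
  ∀ U : Set ℂ, IsOpen U →
    ∀ f : ℕ → ℂ → X, (∀ n, AnalyticOnNhd ℂ (f n) U) →
      (∀ K : Set ℂ, K ⊆ U → IsCompact K →
        TendstoUniformlyOn (fun n z => (T - z • (1 : X →L[ℂ] X)) (f n z)) 0 atTop K) →
      ∀ K : Set ℂ, K ⊆ U → IsCompact K →
        TendstoUniformlyOn (fun n z => f n z) 0 atTop K

/-- The lower bound `m(T) = inf {‖T x‖ : ‖x‖ = 1}` of an operator `T`. -/
noncomputable def lowerBound (T : X →L[ℂ] X) : ℝ :=
  sInf ((fun x => ‖T x‖) '' Metric.sphere (0 : X) 1)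

end Defs

variable {H : Type*} [NormedAddCommGroup H] [InnerProductSpace ℂ H] [CompleteSpace H]


lemma bd_key {X : Type*} [NormedAddCommGroup X] [InnerProductSpace ℂ X] (T : X →L[ℂ] X)
    (e : ℤ → X) (he : Orthonormal ℂ e) (φ : ℤ → ℝ)
    (hT : ∀ n, T (e n) = ((Real.exp (φ (n+1) - φ n) : ℝ) : ℂ) • e (n + 1))
    (hβ : HasBishopBeta T) (p q : ℝ) (hpq : p < q) :
    ∃ C : ℝ, 0 ≤ C ∧ ∀ a i b : ℤ, a ≤ i → i ≤ b →
      φ i ≤ C + φ a + q * ((i:ℝ) - a) ∨ φ i ≤ C + φ b - p * ((b:ℝ) - i) := by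
  by_contra hcon
  push Not at hcon
  have h1 : ∀ j : ℕ, ∃ a : ℤ, ∃ m n : ℕ, m < n ∧
      (j : ℝ) + φ a + q * (m:ℝ) < φ (a + m) ∧ 
      (j : ℝ) + φ (a + n) - p * ((n:ℝ) - m) < φ (a + m) := by
    intro j
    obtain ⟨a, i, b, hai, hib, h1, h2⟩ := hcon j (by positivity)
    obtain ⟨m, rfl⟩ : ∃ m : ℕ, i = a + m := ⟨(i - a).toNat, by omega⟩
    obtain ⟨n, rfl⟩ : ∃ n : ℕ, b = a + n := ⟨(b - a).toNat, by omega⟩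
    refine ⟨a, m, n, ?_, ?_, ?_⟩
    · rcases Nat.lt_or_ge m n with h | h
      · exact h
      · have : m = n := by omega
        subst this
        have : (0:ℝ) ≤ j := by positivity
        simp at h2
        linarith
    · push_cast at h1
      linarith
    · push_cast at h2
      linarith
  choose a m n hmn h1 h2 using h1
  set U : Set ℂ := {z | Real.exp p < ‖z‖ ∧ ‖z‖ < Real.exp q} with hU
  have hUo : IsOpen U := (isOpen_lt continuous_const continuous_norm).inter
    (isOpen_lt continuous_norm continuous_const)
  have hU0 : ∀ z ∈ U, z ≠ 0 := by
    rintro z ⟨hz, -⟩ rfl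
    rw [norm_zero] at hz
    exact absurd hz (not_lt.2 (Real.exp_pos p).le)
  let f : ℕ → ℂ → X := fun j z => ∑ k ∈ Finset.range (n j),
    (((Real.exp (φ (a j + k) - φ (a j + m j)) : ℝ) : ℂ) * z ^ ((m j : ℤ) - k)) • e (a j + k)
  have hf : ∀ j, AnalyticOnNhd ℂ (f j) U := by
    intro j z hz
    refine Finset.analyticAt_fun_sum _ fun k _ => ?_
    refine AnalyticAt.smul (analyticAt_const.mul ?_) analyticAt_const
    exact (analyticAt_id).zpow (hU0 z hz)
  have hval : ∀ j, ∀ z ∈ U, (T - z • (1 : X →L[ℂ] X)) (f j z) =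
      (((Real.exp (φ (a j + n j) - φ (a j + m j)) : ℝ) : ℂ) * z ^ ((m j : ℤ) - n j + 1)) • e (a j + n j)
      - (((Real.exp (φ (a j) - φ (a j + m j)) : ℝ) : ℂ) * z ^ ((m j : ℤ) + 1)) • e (a j) := by
    intro j z hz
    have hz0 := hU0 z hz
    let G : ℕ → X := fun k => (((Real.exp (φ (a j + k) - φ (a j + m j)) : ℝ) : ℂ) * z ^ ((m j : ℤ) - k + 1)) • e (a j + k)
    have := Finset.sum_range_sub G (n j)
    have h0 : G 0 = (((Real.exp (φ (a j) - φ (a j + m j)) : ℝ) : ℂ) * z ^ ((m j : ℤ) + 1)) • e (a j) := by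
      simp [G]
    rw [← h0]
    change _ = G (n j) - G 0
    rw [← this]
    simp only [f, map_sum]
    refine Finset.sum_congr rfl fun k _ => ?_
    simp only [G, map_smul, sub_apply, smul_apply,
      one_apply_eq_self, hT, smul_sub, smul_smul]
    have e1 : a j + ((k + 1 : ℕ) : ℤ) = a j + k + 1 := by push_cast; ring
    rw [e1]
    have e2 : (m j : ℤ) - ((k + 1 : ℕ) : ℤ) + 1 = m j - k := by push_cast; ring
    rw [e2]
    congr 2
    · rw [mul_right_comm, ← Complex.ofReal_mul, ← Real.exp_add]
      congr 3
      ring_nf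
    · rw [zpow_add_one₀ hz0]; ring
  have hnorm : ∀ j, ∀ z ∈ U, ‖(T - z • (1 : X →L[ℂ] X)) (f j z)‖ ≤ 2 * Real.exp q * Real.exp (-(j:ℝ)) := by
    intro j z hz
    rw [hval j z hz]
    have hzp : 0 < ‖z‖ := norm_pos_iff.2 (hU0 z hz)
    obtain ⟨hz1, hz2⟩ := hz
    have hl1 : p < Real.log ‖z‖ := (Real.lt_log_iff_exp_lt hzp).2 hz1
    have hl2 : Real.log ‖z‖ < q := (Real.log_lt_iff_lt_exp hzp).2 hz2
    have hzpw : ∀ l : ℤ, ‖z‖ ^ l = Real.exp (l * Real.log ‖z‖) := by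
      intro l
      rw [mul_comm, Real.exp_mul, Real.exp_log hzp, Real.rpow_intCast]
    have hmn' : (m j : ℝ) ≤ n j := by exact_mod_cast (hmn j).le
    have hm0 : (0:ℝ) ≤ m j := by positivity
    refine (norm_sub_le _ _).trans ?_
    simp only [norm_smul, norm_mul, Complex.norm_real, Real.norm_eq_abs, Real.abs_exp, norm_zpow, he.1,
      mul_one, hzpw, ← Real.exp_add]
    rw [mul_assoc, ← Real.exp_add, two_mul]
    refine add_le_add (Real.exp_le_exp.2 ?_) (Real.exp_le_exp.2 ?_)
    · have := h2 j
      push_cast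
      nlinarith
    · have := h1 j
      push_cast
      nlinarith
  have hconv := hβ U hUo f hf ?_ {((Real.exp ((p+q)/2) : ℝ) : ℂ)} ?_ isCompact_singleton
  · rw [Metric.tendstoUniformlyOn_iff] at hconv
    obtain ⟨j, hj⟩ := (hconv 1 one_pos).exists
    have := hj _ rfl
    simp only [Pi.zero_apply, dist_zero_left] at this
    refine absurd this (not_lt.2 ?_)
    set z : ℂ := ((Real.exp ((p+q)/2) : ℝ) : ℂ)
    have hin : inner ℂ (e (a j + m j)) (f j z) = 1 := by
      simp only [f]
      rw [inner_sum, Finset.sum_eq_single (m j)]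
      · rw [inner_smul_right, inner_self_eq_norm_sq_to_K, he.1]
        simp
      · intro k _ hk
        rw [inner_smul_right, he.2 (by intro h; apply hk; omega), mul_zero]
      · intro h
        exact absurd (Finset.mem_range.2 (hmn j)) h
    have h3 := norm_inner_le_norm (𝕜 := ℂ) (e (a j + m j)) (f j z)
    rw [hin, he.1, norm_one, one_mul] at h3
    exact h3
  · intro K hKU hK
    rw [Metric.tendstoUniformlyOn_iff]
    intro ε hε
    have ht : Tendsto (fun j : ℕ => 2 * Real.exp q * Real.exp (-(j:ℝ))) atTop (nhds (2 * Real.exp q * 0)) :=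
      (Real.tendsto_exp_neg_atTop_nhds_zero.comp tendsto_natCast_atTop_atTop).const_mul _
    rw [mul_zero] at ht
    filter_upwards [ht.eventually_lt_const hε] with j hj z hz
    simp only [Pi.zero_apply, dist_zero_left]
    exact (hnorm j z (hKU hz)).trans_lt hj
  · rintro z rfl
    simp only [hU, Set.mem_setOf_eq, Complex.norm_real, Real.norm_eq_abs, Real.abs_exp, Real.exp_lt_exp]
    constructor <;> linarith

lemma bd_dyn (φ : ℤ → ℝ)
    (H1 : ∀ p q : ℝ, p < q → ∃ C : ℝ, 0 ≤ C ∧ ∀ a i b : ℤ, a ≤ i → i ≤ b →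
      φ i ≤ C + φ a + q * ((i:ℝ) - a) ∨ φ i ≤ C + φ b - p * ((b:ℝ) - i))
    (H2 : ∀ p q : ℝ, p < q → ∃ C : ℝ, 0 ≤ C ∧ ∀ a i b : ℤ, a ≤ i → i ≤ b →
      φ b ≤ C + φ i + q * ((b:ℝ) - i) ∨ φ a ≤ C + φ i - p * ((i:ℝ) - a))
    (σ τ : ℝ) (h : σ < τ) :
    (∃ N : ℕ, ∀ n : ℕ, N ≤ n → ∀ k : ℤ, σ * n ≤ φ (k + n) - φ k) ∨
    (∃ N : ℕ, ∀ n : ℕ, N ≤ n → ∀ k : ℤ, φ (k + n) - φ k ≤ τ * n) := by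
  by_contra hcon
  push Not at hcon
  obtain ⟨hJ, hI⟩ := hcon
  -- levels σ < s < t < u < v < τ
  obtain ⟨δ, hδ, hτ⟩ : ∃ δ : ℝ, 0 < δ ∧ τ = σ + 5 * δ := ⟨(τ - σ) / 5, by linarith, by ring⟩
  obtain ⟨C1, hC1, A1⟩ := H1 (σ + δ) (σ + 2 * δ) (by linarith)
  obtain ⟨C2, hC2, A2⟩ := H2 (σ + δ) (σ + 2 * δ) (by linarith)
  obtain ⟨C3, hC3, B1⟩ := H1 (σ + 3 * δ) (σ + 4 * δ) (by linarith)
  obtain ⟨C4, hC4, B2⟩ := H2 (σ + 3 * δ) (σ + 4 * δ) (by linarith)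
  obtain ⟨D, hD1, hD2, hD3, hD4⟩ : ∃ D : ℝ, C1 ≤ D ∧ C2 ≤ D ∧ C3 ≤ D ∧ C4 ≤ D :=
    ⟨C1 + C2 + C3 + C4, by linarith, by linarith, by linarith, by linarith⟩
  obtain ⟨N, hN⟩ : ∃ N : ℕ, 4 * D < δ * N := by
    obtain ⟨N, hN⟩ := exists_nat_gt (4 * D / δ)
    exact ⟨N, by rwa [div_lt_iff₀' hδ] at hN⟩
  obtain ⟨n, hn, x, hx⟩ := hI N
  obtain ⟨l, hl, c, hc⟩ := hJ (N + n + 1)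
  obtain ⟨y, hy⟩ : ∃ y : ℤ, y = x + n := ⟨_, rfl⟩
  obtain ⟨d, hd⟩ : ∃ d : ℤ, d = c + l := ⟨_, rfl⟩
  rw [← hy] at hx
  rw [← hd] at hc
  have hyR : (y : ℝ) = x + n := by rw [hy]; push_cast; ring
  have hdR : (d : ℝ) = c + l := by rw [hd]; push_cast; ring
  have hnN : 4 * D < δ * n := hN.trans_le (by gcongr)
  have hlN : 4 * D < δ * l := hN.trans_le (by gcongr; omega)
  have hIb : ∀ b : ℤ, y ≤ b → φ y + (σ + 3 * δ) * ((b:ℝ) - y) - D ≤ φ b := by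
    intro b hb
    rcases B1 x y b (by omega) hb with h | h
    · exfalso; (try rw [hyR] at h); (try rw [hdR] at h); subst hτ; ring_nf at h hx hc hnN hlN; linarith
    · linarith
  have hIa : ∀ a : ℤ, a ≤ x → φ a + (σ + 3 * δ) * ((x:ℝ) - a) - D ≤ φ x := by
    intro a ha
    rcases B2 a x y ha (by omega) with h | h
    · exfalso; (try rw [hyR] at h); (try rw [hdR] at h); subst hτ; ring_nf at h hx hc hnN hlN; linarith
    · linarith
  have hJb : ∀ b : ℤ, d ≤ b → φ b ≤ φ d + (σ + 2 * δ) * ((b:ℝ) - d) + D := by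
    intro b hb
    rcases A2 c d b (by omega) hb with h | h
    · linarith
    · exfalso; (try rw [hyR] at h); (try rw [hdR] at h); subst hτ; ring_nf at h hx hc hnN hlN; linarith
  have hJa : ∀ a : ℤ, a ≤ c → φ c ≤ φ a + (σ + 2 * δ) * ((c:ℝ) - a) + D := by
    intro a ha
    rcases A1 a c d ha (by omega) with h | h
    · linarith
    · exfalso; (try rw [hyR] at h); (try rw [hdR] at h); subst hτ; ring_nf at h hx hc hnN hlN; linarith
  have hl0 : (0:ℝ) ≤ l := by positivity
  have hn0 : (0:ℝ) ≤ n := by positivity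
  rcases le_total x c with hxc | hxc <;> rcases le_total y d with hyd | hyd
  · have k1 := hIb d hyd
    have k2 := hJa x hxc
    have hA : (x:ℝ) ≤ c := by exact_mod_cast hxc
    have hB : (y:ℝ) ≤ d := by exact_mod_cast hyd
    have m1 := mul_nonneg hδ.le (sub_nonneg.2 hA)
    have m2 := mul_nonneg hδ.le (sub_nonneg.2 hB)
    have m3 := mul_nonneg hδ.le hl0
    have m4 := mul_nonneg hδ.le hn0
    simp only [hyR, hdR] at k1 k2 m1 m2
    subst hτ
    ring_nf at k1 k2 m1 m2 m3 m4 hx hc hnN hlN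
    linarith
  · omega
  · have k1 := hIb d hyd
    have k2 := hIa c hxc
    have hA : (c:ℝ) ≤ x := by exact_mod_cast hxc
    have hB : (y:ℝ) ≤ d := by exact_mod_cast hyd
    have m1 := mul_nonneg hδ.le (sub_nonneg.2 hA)
    have m2 := mul_nonneg hδ.le (sub_nonneg.2 hB)
    have m3 := mul_nonneg hδ.le hl0
    have m4 := mul_nonneg hδ.le hn0
    simp only [hyR, hdR] at k1 k2 m1 m2
    subst hτ
    ring_nf at k1 k2 m1 m2 m3 m4 hx hc hnN hlN
    linarith
  · have k1 := hIa c hxc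
    have k2 := hJb y hyd
    have hA : (c:ℝ) ≤ x := by exact_mod_cast hxc
    have hB : (d:ℝ) ≤ y := by exact_mod_cast hyd
    have m1 := mul_nonneg hδ.le (sub_nonneg.2 hA)
    have m2 := mul_nonneg hδ.le (sub_nonneg.2 hB)
    have m3 := mul_nonneg hδ.le hl0
    have m4 := mul_nonneg hδ.le hn0
    simp only [hyR, hdR] at k1 k2 m1 m2
    subst hτ
    ring_nf at k1 k2 m1 m2 m3 m4 hx hc hnN hlN
    linarith

lemma bd_norm (e : HilbertBasis ℤ ℂ H) (x : H) :
    HasSum (fun i => ‖inner ℂ (e i) x‖ ^ 2) (‖x‖ ^ 2) := by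
  have := lp.hasSum_norm (p := 2) (by norm_num) (e.repr x)
  simpa [e.repr_apply_apply] using this

lemma bd_ext (e : HilbertBasis ℤ ℂ H) (x y : H)
    (h : ∀ i, inner ℂ (e i) x = inner ℂ (e i) y) : x = y := by
  apply e.repr.injective
  ext i
  rw [e.repr_apply_apply, e.repr_apply_apply, h]

lemma bd_adj (S : H →L[ℂ] H) (e : HilbertBasis ℤ ℂ H) (w : ℤ → ℝ)
    (hS : ∀ n, S (e n) = (w n : ℂ) • e (n + 1)) (n : ℤ) :
    ContinuousLinearMap.adjoint S (e (n + 1)) = (w n : ℂ) • e n := by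
  apply bd_ext e
  intro i
  rw [ContinuousLinearMap.adjoint_inner_right, hS, inner_smul_left, inner_smul_right,
    orthonormal_iff_ite.1 e.orthonormal, orthonormal_iff_ite.1 e.orthonormal]
  by_cases h : i = n
  · subst h; simp
  · simp [h]

lemma bd_pow (S : H →L[ℂ] H) (e : HilbertBasis ℤ ℂ H) (φ : ℤ → ℝ)
    (hS : ∀ n, S (e n) = ((Real.exp (φ (n+1) - φ n) : ℝ) : ℂ) • e (n + 1)) (n : ℕ) (k : ℤ) (x : H) :
    inner ℂ (e (k + n)) ((S ^ n) x) = ((Real.exp (φ (k+n) - φ k) : ℝ) : ℂ) * inner ℂ (e k) x := by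
  induction n with
  | zero => simp
  | succ n ih =>
    have e1 : k + ((n + 1 : ℕ) : ℤ) = k + n + 1 := by push_cast; ring
    rw [e1, pow_succ', mul_apply_eq_comp, ← ContinuousLinearMap.adjoint_inner_left,
      bd_adj S e _ hS, inner_smul_left, ih, ← mul_assoc, Complex.conj_ofReal, ← Complex.ofReal_mul,
      ← Real.exp_add]
    congr 3
    ring_nf

lemma bd_hasSum (S : H →L[ℂ] H) (e : HilbertBasis ℤ ℂ H) (φ : ℤ → ℝ)
    (hS : ∀ n, S (e n) = ((Real.exp (φ (n+1) - φ n) : ℝ) : ℂ) • e (n + 1)) (n : ℕ) (x : H) :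
    HasSum (fun k : ℤ => (Real.exp (φ (k+n) - φ k) * ‖inner ℂ (e k) x‖) ^ 2) (‖(S ^ n) x‖ ^ 2) := by
  have h := (Equiv.addRight (n : ℤ)).hasSum_iff.2 (bd_norm e ((S ^ n) x))
  refine h.congr_fun ?_ |> id
  intro k
  simp only [Function.comp, Equiv.coe_addRight, bd_pow S e φ hS, norm_mul, Complex.norm_real,
    Real.norm_eq_abs, Real.abs_exp]

lemma bd_up (S : H →L[ℂ] H) (e : HilbertBasis ℤ ℂ H) (φ : ℤ → ℝ)
    (hS : ∀ n, S (e n) = ((Real.exp (φ (n+1) - φ n) : ℝ) : ℂ) • e (n + 1)) (n : ℕ) (τ : ℝ)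
    (h : ∀ k : ℤ, φ (k + n) - φ k ≤ τ * n) : ‖S ^ n‖ ≤ Real.exp τ ^ n := by
  refine ContinuousLinearMap.opNorm_le_bound _ (by positivity) fun x => ?_
  refine (sq_le_sq₀ (by positivity) (by positivity)).1 ?_
  rw [mul_pow]
  refine hasSum_le (fun k => ?_) (bd_hasSum S e φ hS n x) ((bd_norm e x).mul_left _)
  rw [← mul_pow]
  gcongr
  rw [← Real.exp_nat_mul, mul_comm]
  exact Real.exp_le_exp.2 (h k)

lemma bd_low (S : H →L[ℂ] H) (e : HilbertBasis ℤ ℂ H) (φ : ℤ → ℝ)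
    (hS : ∀ n, S (e n) = ((Real.exp (φ (n+1) - φ n) : ℝ) : ℂ) • e (n + 1)) (n : ℕ) (σ : ℝ)
    (h : ∀ k : ℤ, σ * n ≤ φ (k + n) - φ k) (x : H) : Real.exp σ ^ n * ‖x‖ ≤ ‖(S ^ n) x‖ := by
  refine (sq_le_sq₀ (by positivity) (by positivity)).1 ?_
  rw [mul_pow]
  refine hasSum_le (fun k => ?_) ((bd_norm e x).mul_left _) (bd_hasSum S e φ hS n x)
  rw [← mul_pow]
  gcongr
  rw [← Real.exp_nat_mul, mul_comm]
  exact Real.exp_le_exp.2 (h k)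

lemma bd_phi (g : ℤ → ℝ) : ∃ φ : ℤ → ℝ, ∀ n, φ (n + 1) - φ n = g n := by
  refine ⟨fun n => ∑ i ∈ Finset.range n.toNat, g i - ∑ i ∈ Finset.range (-n).toNat, g (-(i:ℤ) - 1),
    fun n => ?_⟩
  rcases le_or_gt 0 n with h | h
  · have h1 : (n + 1).toNat = n.toNat + 1 := by omega
    have h2 : (-(n + 1)).toNat = 0 := by omega
    have h3 : (-n).toNat = 0 := by omega
    simp [h1, h2, h3, Finset.sum_range_succ, -neg_add_rev, h]
  · have h1 : (n + 1).toNat = 0 := by omega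
    have h2 : n.toNat = 0 := by omega
    have h3 : (-n).toNat = (-(n + 1)).toNat + 1 := by omega
    have h4 : -((-(n + 1)).toNat : ℤ) - 1 = n := by omega
    simp only [h1, h2, h3, Finset.sum_range_succ, h4]
    simp

lemma bd_alt (S : H →L[ℂ] H) (e : HilbertBasis ℤ ℂ H) (φ : ℤ → ℝ)
    (hS : ∀ n, S (e n) = ((Real.exp (φ (n+1) - φ n) : ℝ) : ℂ) • e (n + 1))
    (hβ : HasBishopBeta S) (hβadj : HasBishopBeta (ContinuousLinearMap.adjoint S))
    (σ τ : ℝ) (h : σ < τ) :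
    (∃ N : ℕ, ∀ n : ℕ, N ≤ n → ∀ x, Real.exp σ ^ n * ‖x‖ ≤ ‖(S ^ n) x‖) ∨
    (∃ N : ℕ, ∀ n : ℕ, N ≤ n → ‖S ^ n‖ ≤ Real.exp τ ^ n) := by
  have key := bd_dyn φ (fun p q hpq => bd_key S e e.orthonormal φ hS hβ p q hpq) (fun p q hpq => by
    obtain ⟨C, hC, hh⟩ := bd_key (ContinuousLinearMap.adjoint S) (fun n => e (-n))
      (e.orthonormal.comp _ neg_injective) (fun n => -φ (-n)) (fun n => by
        have := bd_adj S e _ hS (-n - 1)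
        rw [sub_add_cancel] at this
        have e1 : -(n + 1) = -n - 1 := by ring
        rw [this, e1]
        congr 3
        ring_nf) hβadj p q hpq
    refine ⟨C, hC, fun a i b hai hib => ?_⟩
    have := hh (-b) (-i) (-a) (by omega) (by omega)
    simp only [neg_neg] at this
    push_cast at this
    rcases this with h | h
    · left; linarith
    · right; linarith) σ τ h
  rcases key with ⟨N, hN⟩ | ⟨N, hN⟩
  · exact Or.inl ⟨N, fun n hn x => bd_low S e φ hS n σ (hN n hn) x⟩
  · exact Or.inr ⟨N, fun n hn => bd_up S e φ hS n τ (hN n hn)⟩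

lemma bd_rot (S : H →L[ℂ] H) (e : HilbertBasis ℤ ℂ H) (w : ℤ → ℝ)
    (hS : ∀ n, S (e n) = (w n : ℂ) • e (n + 1)) (c : ℂ) (hc : ‖c‖ = 1) (z : ℂ)
    (hz : z ∈ spectrum ℂ S) : c * z ∈ spectrum ℂ S := by
  have hc0 : c ≠ 0 := by rintro rfl; simp at hc
  have hon : Orthonormal ℂ (fun k : ℤ => (c ^ k) • e k) := by
    refine ⟨fun k => by simp [norm_smul, hc, e.orthonormal.1], fun i j hij => ?_⟩
    simp [inner_smul_left, inner_smul_right, e.orthonormal.2 hij]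
  have hbot : (Submodule.span ℂ (Set.range (fun k : ℤ => (c ^ k) • e k)))ᗮ = ⊥ := by
    rw [eq_bot_iff]
    intro x hx
    rw [Submodule.mem_bot]
    apply bd_ext e
    intro i
    have := (Submodule.mem_orthogonal _ _).1 hx _ (Submodule.subset_span ⟨i, rfl⟩)
    rw [inner_smul_left] at this
    rw [inner_zero_right]
    refine (mul_eq_zero.1 this).resolve_left ?_
    exact (map_ne_zero _).2 (zpow_ne_zero i hc0)
  let e' := HilbertBasis.mkOfOrthogonalEqBot hon hbot
  have he' : ∀ k, e' k = c ^ k • e k := fun k => by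
    simp [e', HilbertBasis.coe_mkOfOrthogonalEqBot]
  let V : H ≃L[ℂ] H := (e.repr.trans e'.repr.symm).toContinuousLinearEquiv
  have hV : ∀ k, V (e k) = c ^ k • e k := by
    intro k
    classical
    change e'.repr.symm (e.repr (e k)) = _
    rw [e.repr_self, e'.repr_symm_single, he']
  let u := V.toUnit
  have hu : ∀ x, (u : H →L[ℂ] H) x = V x := fun x => rfl
  have hcomm : (u : H →L[ℂ] H) * S = (c • S) * u := by
    refine ContinuousLinearMap.ext_on (s := Set.range e) ?_ ?_
    · rw [Submodule.dense_iff_topologicalClosure_eq_top]; exact e.dense_span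
    · rintro _ ⟨k, rfl⟩
      simp only [mul_apply_eq_comp, hu, hV, hS, map_smul, smul_apply, smul_smul]
      congr 1
      rw [zpow_add_one₀ hc0]; ring
  have hconj : (u : H →L[ℂ] H) * S * (↑u⁻¹ : H →L[ℂ] H) = c • S := by
    rw [hcomm, mul_assoc, Units.mul_inv, mul_one]
  have h1 : spectrum ℂ (c • S) = spectrum ℂ S := by
    rw [← hconj]; exact spectrum.units_conjugate
  rw [← h1]
  have h2 := spectrum.unit_smul_eq_smul S (Units.mk0 c hc0)
  change spectrum ℂ (c • S) = _ at h2
  rw [h2]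
  exact ⟨z, hz, rfl⟩

lemma bd_lb_le [Nontrivial H] (T : H →L[ℂ] H) : lowerBound T ≤ ‖T‖ := by
  obtain ⟨x, hx⟩ := exists_norm_eq H (zero_le_one (α := ℝ))
  have h1 : lowerBound T ≤ ‖T x‖ := by
    refine csInf_le ⟨0, ?_⟩ ⟨x, by simp [hx], rfl⟩
    rintro _ ⟨y, -, rfl⟩; positivity
  refine h1.trans ?_
  · simpa [hx] using T.le_opNorm x

lemma bd_lb_nonneg (T : H →L[ℂ] H) : 0 ≤ lowerBound T := by
  refine Real.sInf_nonneg ?_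
  rintro _ ⟨y, -, rfl⟩; positivity

lemma bd_le_lb [Nontrivial H] (T : H →L[ℂ] H) (c : ℝ) (h : ∀ x, c * ‖x‖ ≤ ‖T x‖) :
    c ≤ lowerBound T := by
  obtain ⟨x, hx⟩ := exists_norm_eq H (zero_le_one (α := ℝ))
  refine le_csInf ⟨_, ⟨x, by simp [hx], rfl⟩⟩ ?_
  rintro _ ⟨y, hy, rfl⟩
  have := h y
  rw [mem_sphere_zero_iff_norm] at hy
  simpa [hy] using this

lemma bd_surj (S : H →L[ℂ] H) (e : HilbertBasis ℤ ℂ H) (w : ℤ → ℝ) (hw : ∀ n, w n ≠ 0)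
    (hS : ∀ n, S (e n) = (w n : ℂ) • e (n + 1)) (n : ℕ) (k : ℤ) :
    ∃ y, (S ^ n) y = e k := by
  induction n generalizing k with
  | zero => exact ⟨e k, by simp⟩
  | succ n ih =>
    obtain ⟨y, hy⟩ := ih (k - 1)
    refine ⟨((w (k-1) : ℂ))⁻¹ • y, ?_⟩
    rw [map_smul, pow_succ', mul_apply_eq_comp, hy, hS, smul_smul, sub_add_cancel,
      inv_mul_cancel₀ (by exact_mod_cast hw _), one_smul]

lemma bd_unit (S : H →L[ℂ] H) (e : HilbertBasis ℤ ℂ H) (w : ℤ → ℝ) (hw : ∀ n, w n ≠ 0)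
    (hS : ∀ n, S (e n) = (w n : ℂ) • e (n + 1)) (n : ℕ) (c : ℝ) (hc : 0 < c)
    (h : ∀ x, c * ‖x‖ ≤ ‖(S ^ n) x‖) : IsUnit (S ^ n) := by
  have hanti : AntilipschitzWith (Real.toNNReal c⁻¹) (S ^ n) := by
    refine AddMonoidHomClass.antilipschitz_of_bound _ fun x => ?_
    rw [Real.coe_toNNReal _ (by positivity), inv_mul_eq_div, le_div_iff₀' hc]
    exact h x
  rw [ContinuousLinearMap.isUnit_iff_bijective]
  refine ⟨hanti.injective, ?_⟩
  rw [← Set.range_eq_univ]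
  have hcl := hanti.isClosed_range (S ^ n).uniformContinuous
  rw [← hcl.closure_eq]
  have hd : Dense (Submodule.span ℂ (Set.range e) : Set H) := by
    rw [Submodule.dense_iff_topologicalClosure_eq_top]; exact e.dense_span
  have hsub : (Submodule.span ℂ (Set.range e) : Set H) ⊆ Set.range (S ^ n) := by
    have : Submodule.span ℂ (Set.range e) ≤ LinearMap.range ((S ^ n : H →L[ℂ] H) : H →ₗ[ℂ] H) := by
      rw [Submodule.span_le]
      rintro _ ⟨k, rfl⟩
      exact bd_surj S e w hw hS n k
    exact this
  exact (hd.mono hsub).closure_eq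

lemma bd_spec (S : H →L[ℂ] H) (n : ℕ) (ρ : ℝ) (hρ : 0 < ρ) (hn : n ≠ 0)
    (hu : IsUnit (S ^ n)) (h : ∀ x, ρ ^ n * ‖x‖ ≤ ‖(S ^ n) x‖) (z : ℂ)
    (hz : z ∈ spectrum ℂ S) : ρ ≤ ‖z‖ := by
  by_contra! hlt
  have h1 := spectrum.pow_mem_pow S n hz
  rw [spectrum.mem_iff] at h1
  apply h1
  rw [← IsUnit.neg_iff, neg_sub]
  have hpow : ‖z‖ ^ n < ρ ^ n := pow_lt_pow_left₀ hlt (norm_nonneg _) hn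
  obtain ⟨u, hu⟩ := hu
  rcases subsingleton_or_nontrivial H with hH | hH
  · exact isUnit_of_subsingleton _
  have hinv : ‖(↑u⁻¹ : H →L[ℂ] H)‖ ≤ (ρ ^ n)⁻¹ := by
    refine ContinuousLinearMap.opNorm_le_bound _ (by positivity) fun x => ?_
    have := h ((↑u⁻¹ : H →L[ℂ] H) x)
    rw [← hu, ← mul_apply_eq_comp, Units.mul_inv, one_apply_eq_self] at this
    rwa [inv_mul_eq_div, le_div_iff₀' (by positivity)]
  refine ⟨Units.ofNearby u (S ^ n - algebraMap ℂ (H →L[ℂ] H) (z ^ n)) ?_, rfl⟩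
  rw [hu, sub_sub_cancel_left, norm_neg, norm_algebraMap', norm_pow]
  refine hpow.trans_le ?_
  rw [le_inv_comm₀ (by positivity) (Units.norm_pos _)]
  exact hinv

/-- If a bilateral weighted shift `S` with positive bounded weights is decomposable
(i.e. both `S` and `S*` possess Bishop's property (β)), then either `S` is
quasi-nilpotent, or `S` is invertible and its spectrum is the circle of radius `r(S)`;
in particular `r₁(S) = lim m(Sⁿ)^(1/n)` equals `r(S)`. -/
theorem bilateral_decomposable (S : H →L[ℂ] H)
    (e : HilbertBasis ℤ ℂ H) (ω : ℤ → ℝ) (hpos : ∀ n, 0 < ω n)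
    (hbd : ∃ M : ℝ, ∀ n, ω n ≤ M)
    (hS : ∀ n, S (e n) = (ω n : ℂ) • e (n + 1))
    (hβ : HasBishopBeta S) (hβadj : HasBishopBeta (ContinuousLinearMap.adjoint S)) :
    (spectrum ℂ S = {0} ∨
      (IsUnit S ∧ spectrum ℂ S = Metric.sphere (0 : ℂ) (spectralRadius ℂ S).toReal)) ∧
    Tendsto (fun n : ℕ => lowerBound (S ^ n) ^ ((n : ℝ)⁻¹)) atTop
      (nhds (spectralRadius ℂ S).toReal) := by
  classical
  have hnt : Nontrivial H := ⟨e 0, 0, e.orthonormal.ne_zero 0⟩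
  obtain ⟨φ, hφ⟩ := bd_phi (fun n => Real.log (ω n))
  have hS' : ∀ n, S (e n) = ((Real.exp (φ (n+1) - φ n) : ℝ) : ℂ) • e (n + 1) := by
    intro n
    rw [hS, hφ, Real.exp_log (hpos n)]
  have halt := bd_alt S e φ hS' hβ hβadj
  have hfin : spectralRadius ℂ S ≠ ⊤ :=
    ((spectrum.spectralRadius_le_nnnorm S).trans_lt ENNReal.coe_lt_top).ne
  obtain ⟨r, hr⟩ : ∃ r : ℝ, r = (spectralRadius ℂ S).toReal := ⟨_, rfl⟩
  have hr0 : 0 ≤ r := hr ▸ ENNReal.toReal_nonneg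
  have hG : Tendsto (fun n : ℕ => ‖S ^ n‖ ^ ((n : ℝ)⁻¹)) atTop (nhds r) := by
    have := (ENNReal.tendsto_toReal hfin).comp
      (spectrum.pow_norm_pow_one_div_tendsto_nhds_spectralRadius S)
    rw [hr]
    refine this.congr fun n => ?_
    simp only [Function.comp, one_div]
    exact ENNReal.toReal_ofReal (by positivity)
  have hle : ∀ z ∈ spectrum ℂ S, ‖z‖ ≤ r := by
    intro z hz
    have h1 : (‖z‖₊ : ENNReal) ≤ spectralRadius ℂ S := le_iSup₂ (f := fun (k : ℂ) (_ : k ∈ spectrum ℂ S) => (‖k‖₊ : ENNReal)) z hz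
    have := ENNReal.toReal_mono hfin h1
    rw [hr]
    simpa using this
  have hlow : ∀ ρ : ℝ, 0 < ρ → ρ < r → ∃ N : ℕ, ∀ n : ℕ, N ≤ n → ∀ x, ρ ^ n * ‖x‖ ≤ ‖(S ^ n) x‖ := by
    intro ρ hρ hρr
    obtain ⟨ρ', h1, h2⟩ := exists_between hρr
    rcases halt (Real.log ρ) (Real.log ρ') (Real.log_lt_log hρ h1) with h | ⟨N, hN⟩
    · rwa [Real.exp_log hρ] at h
    · exfalso
      rw [Real.exp_log (hρ.trans h1)] at hN
      refine absurd (le_of_tendsto hG ?_) (not_le.2 h2)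
      filter_upwards [eventually_ge_atTop N, eventually_ne_atTop 0] with n hn hn0
      calc ‖S ^ n‖ ^ ((n : ℝ)⁻¹) ≤ (ρ' ^ n) ^ ((n : ℝ)⁻¹) := by
            gcongr
            exact hN n hn
        _ = ρ' := Real.pow_rpow_inv_natCast (hρ.trans h1).le hn0
  rw [← hr]
  constructor
  · rcases hr0.eq_or_lt with h0 | h0
    · left
      obtain ⟨z, hz⟩ := spectrum.nonempty S
      have hz0 : ∀ z ∈ spectrum ℂ S, z = 0 := fun z hz =>
        norm_le_zero_iff.1 (h0 ▸ hle z hz)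
      ext w
      rw [Set.mem_singleton_iff]
      refine ⟨hz0 w, ?_⟩
      rintro rfl
      rwa [← hz0 z hz]
    · right
      have hun : ∀ n (ρ : ℝ), 0 < ρ → (∀ x, ρ ^ n * ‖x‖ ≤ ‖(S ^ n) x‖) → IsUnit (S ^ n) :=
        fun n ρ hρ h => bd_unit S e ω (fun n => (hpos n).ne') hS n (ρ ^ n) (by positivity) h
      have hge : ∀ z ∈ spectrum ℂ S, r ≤ ‖z‖ := by
        intro z hz
        by_contra! hlt
        obtain ⟨ρ, h1, h2⟩ := exists_between hlt
        have hρ : 0 < ρ := (norm_nonneg z).trans_lt h1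
        obtain ⟨N, hN⟩ := hlow ρ hρ h2
        exact absurd (bd_spec S (N + 1) ρ hρ (by omega)
          (hun _ ρ hρ (hN _ (by omega))) (hN _ (by omega)) z hz) (not_le.2 h1)
      constructor
      · obtain ⟨N, hN⟩ := hlow (r / 2) (by linarith) (by linarith)
        exact (isUnit_pow_iff (Nat.succ_ne_zero N)).1
          (hun (N + 1) (r / 2) (by linarith) (hN _ (by omega)))
      · obtain ⟨z, hz⟩ := spectrum.nonempty S
        ext w
        rw [mem_sphere_zero_iff_norm]
        refine ⟨fun hw => le_antisymm (hle w hw) (hge w hw), fun hw => ?_⟩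
        have hzr : ‖z‖ = r := le_antisymm (hle z hz) (hge z hz)
        have hz0 : z ≠ 0 := norm_pos_iff.1 (hzr ▸ h0)
        have := bd_rot S e ω hS (w / z) (by rw [norm_div, hw, hzr, div_self h0.ne']) z hz
        rwa [div_mul_cancel₀ _ hz0] at this
  · rw [tendsto_order]
    constructor
    · intro a ha
      rcases lt_or_ge a 0 with h0 | h0
      · exact Eventually.of_forall fun n => h0.trans_le (Real.rpow_nonneg (bd_lb_nonneg _) _)
      · obtain ⟨ρ, h1, h2⟩ := exists_between ha
        have hρ := h0.trans_lt h1
        obtain ⟨N, hN⟩ := hlow ρ hρ h2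
        filter_upwards [eventually_ge_atTop N, eventually_ne_atTop 0] with n hn hn0
        refine h1.trans_le ?_
        calc ρ = (ρ ^ n) ^ ((n : ℝ)⁻¹) := (Real.pow_rpow_inv_natCast hρ.le hn0).symm
          _ ≤ _ := by
            gcongr
            exact bd_le_lb _ _ (hN n hn)
    · intro a ha
      filter_upwards [hG.eventually_lt_const ha] with n hn
      exact (Real.rpow_le_rpow (bd_lb_nonneg _) (bd_lb_le _) (by positivity)).trans_lt hn
end
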